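/- arXiv:1210.0296 — 4 statements merged into one kernel-verified Lean document; each statement's English description precedes it below -/
import Mathlib

section
/- (Time-degenerate coercivity estimate.) Let 0 < s < 1 and let the collision kernel b satisfy b(cos θ)·θ^{2+2s} → K as θ → 0+ for some K > 0. Let α ∈ (2s, 2], let F₀ be a Borel probability measure on ℝ³ which is not a single Dirac mass, with characteristic function ψ₀ ∈ 𝒦^α, and let ψ be a solution of the Fourier-transformed (Bobylev) homogeneous Boltzmann Cauchy problem with initial datum ψ₀. Then there exist T > 0 and C > 0 such that for every t ∈ [0, T] and every measurable h : ℝ³ → ℂ with ∫_{ℝ³} (1+|ξ|²)^s |h(ξ)|² dξ < ∞, one has t ∫_{ℝ³} (1+|ξ|²)^s |h(ξ)|² dξ ≤ C ( ∫_{ℝ³} ( ∫_{S²} b(ξ·σ/|ξ|) (1 − |ψ(t, ξ⁻)|) dσ ) |h(ξ)|² dξ + ∫_{ℝ³} |h(ξ)|² dξ ), where ξ⁻ = (ξ − |ξ|σ)/2. -/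
noncomputable section

open MeasureTheory Real Filter Metric Set
open scoped RealInnerProductSpace Topology

/-- ℝ³ as a Euclidean space. -/
abbrev E3 : Type := EuclideanSpace ℝ (Fin 3)

/-- The surface measure on the unit sphere S² ⊂ ℝ³. -/
def sphμ : Measure (sphere (0 : E3) 1) := (volume : Measure E3).toSphere

/-- The characteristic function (Fourier transform) of a Borel measure on ℝ³,
`ψ(ξ) = ∫ e^{-i v·ξ} dΨ(v)`. -/
def charFn (Ψ : Measure E3) (ξ : E3) : ℂ :=
  ∫ v, Complex.exp (-(Complex.I * (⟪v, ξ⟫ : ℂ))) ∂Ψ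

/-- `ψ` is a characteristic function of some Borel probability measure on ℝ³. -/
def IsCharFn (ψ : E3 → ℂ) : Prop :=
  ∃ Ψ : Measure E3, IsProbabilityMeasure Ψ ∧ ψ = charFn Ψ

/-- Finiteness of `‖φ - 1‖_α`, i.e. the quantitative part of membership in `𝒦^α`. -/
def KBdd (α : ℝ) (φ : E3 → ℂ) : Prop :=
  ∃ C : ℝ, ∀ ξ : E3, ξ ≠ 0 → ‖φ ξ - 1‖ ≤ C * ‖ξ‖ ^ α

/-- Membership in the space `𝒦^α`. -/
def memK (α : ℝ) (φ : E3 → ℂ) : Prop := IsCharFn φ ∧ KBdd α φ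

/-- The distance `‖φ - φ'‖_α = sup_{ξ ≠ 0} |φ(ξ) - φ'(ξ)|/|ξ|^α` on `𝒦^α`. -/
def Kdist (α : ℝ) (φ φ' : E3 → ℂ) : ℝ :=
  ⨆ ξ : {ξ : E3 // ξ ≠ 0}, ‖φ ξ.1 - φ' ξ.1‖ / ‖(ξ.1 : E3)‖ ^ α

/-- `ξ⁺ = ξ/2 + (|ξ|/2)σ`. -/
def xiPlus (ξ : E3) (σ : sphere (0 : E3) 1) : E3 := (1/2 : ℝ) • ξ + (‖ξ‖ / 2) • (σ : E3)

/-- `ξ⁻ = ξ/2 - (|ξ|/2)σ`. -/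
def xiMinus (ξ : E3) (σ : sphere (0 : E3) 1) : E3 := (1/2 : ℝ) • ξ - (‖ξ‖ / 2) • (σ : E3)

/-- The Bobylev collision integrand at time `t`, frequency `ξ`, direction `σ`. -/
def bobylevIntegrand (b : ℝ → ℝ) (ψ : ℝ → E3 → ℂ) (t : ℝ) (ξ : E3)
    (σ : sphere (0 : E3) 1) : ℂ :=
  (b (⟪ξ, (σ : E3)⟫ / ‖ξ‖) : ℂ) *
    (ψ t (xiPlus ξ σ) * ψ t (xiMinus ξ σ) - ψ t ξ)

/-- `ψ : [0,∞) × ℝ³ → ℂ` is a solution of the Fourier-transformed (Bobylev)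
homogeneous Boltzmann Cauchy problem with collision kernel `b` and initial datum `ψ₀`. -/
structure IsBobylevSolution (b : ℝ → ℝ) (ψ : ℝ → E3 → ℂ) (ψ₀ : E3 → ℂ) : Prop where
  cont : ContinuousOn (fun p : ℝ × E3 => ψ p.1 p.2) (Set.Ici 0 ×ˢ Set.univ)
  init : ψ 0 = ψ₀
  isCharFn : ∀ t ≥ 0, IsCharFn (ψ t)
  integrable : ∀ t ≥ 0, ∀ ξ : E3, Integrable (bobylevIntegrand b ψ t ξ) sphμ
  eq : ∀ t ≥ 0, ∀ ξ : E3, HasDerivWithinAt (fun τ => ψ τ ξ)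
      (∫ σ, bobylevIntegrand b ψ t ξ σ ∂sphμ) (Set.Ici 0) t

/-- Continuity of `t ↦ ψ(t,·)` from `[0,∞)` into the metric space `(𝒦^α, ‖·‖_α)`. -/
def KContinuous (α : ℝ) (ψ : ℝ → E3 → ℂ) : Prop :=
  ∀ t₀ ∈ Set.Ici (0:ℝ), Tendsto (fun t => Kdist α (ψ t) (ψ t₀)) (𝓝[Set.Ici (0:ℝ)] t₀) (𝓝 0)

/-- The angular singularity assumption `b(cos θ) θ^{2+2s} → K` as `θ → 0+`. -/
def KernelSingular (b : ℝ → ℝ) (s K : ℝ) : Prop :=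
  Tendsto (fun θ : ℝ => b (Real.cos θ) * θ ^ (2 + 2*s)) (𝓝[>] 0) (𝓝 K)

/-- The defect `1 - |φ|²`. -/
def mm (φ : E3 → ℂ) (x : E3) : ℝ := 1 - ‖φ x‖ ^ 2

/-- The plane wave. -/
def ew (x v : E3) : ℂ := Complex.exp (-(Complex.I * (⟪v, x⟫ : ℂ)))

lemma ew_norm (x v : E3) : ‖ew x v‖ = 1 := by
  unfold ew
  rw [show (-(Complex.I * ((⟪v, x⟫ : ℝ) : ℂ))) = ((-⟪v, x⟫ : ℝ) : ℂ) * Complex.I by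
    push_cast; ring]
  exact Complex.norm_exp_ofReal_mul_I _

lemma ew_add (x y v : E3) : ew (x + y) v = ew x v * ew y v := by
  unfold ew
  rw [← Complex.exp_add, inner_add_right]
  congr 1
  push_cast; ring

lemma ew_neg (x v : E3) : ew (-x) v = (starRingEnd ℂ) (ew x v) := by
  unfold ew
  rw [← Complex.exp_conj, inner_neg_right]
  congr 1
  simp

lemma ew_cont (x : E3) : Continuous (ew x) := by
  unfold ew; fun_prop

lemma ew_integrable (Ψ : Measure E3) [IsProbabilityMeasure Ψ] (x : E3) :
    Integrable (ew x) Ψ := by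
  refine Integrable.of_bound (ew_cont x).aestronglyMeasurable 1 ?_
  filter_upwards with v
  rw [ew_norm]

lemma charFn_eq (Ψ : Measure E3) (x : E3) : charFn Ψ x = ∫ v, ew x v ∂Ψ := rfl

lemma charFn_neg (Ψ : Measure E3) (x : E3) :
    charFn Ψ (-x) = (starRingEnd ℂ) (charFn Ψ x) := by
  rw [charFn_eq, charFn_eq, ← integral_conj]
  simp_rw [ew_neg]

lemma charFn_zero (Ψ : Measure E3) [IsProbabilityMeasure Ψ] : charFn Ψ 0 = 1 := by
  simp [charFn]

lemma ew_sub_sq_integrable (Ψ : Measure E3) [IsProbabilityMeasure Ψ] (x : E3) (c : ℂ) :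
    Integrable (fun v => ‖ew x v - c‖ ^ 2) Ψ := by
  have hc : Continuous (fun v => ‖ew x v - c‖ ^ 2) :=
    (((ew_cont x).sub continuous_const).norm).pow 2
  refine Integrable.of_bound hc.aestronglyMeasurable ((1 + ‖c‖) ^ 2) ?_
  filter_upwards with v
  rw [Real.norm_of_nonneg (by positivity)]
  gcongr
  calc ‖ew x v - c‖ ≤ ‖ew x v‖ + ‖c‖ := norm_sub_le _ _
    _ = 1 + ‖c‖ := by rw [ew_norm]

lemma var_eq (Ψ : Measure E3) [IsProbabilityMeasure Ψ] (x : E3) (c : ℂ) :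
    ∫ v, ‖ew x v - c‖ ^ 2 ∂Ψ = mm (charFn Ψ) x + ‖charFn Ψ x - c‖ ^ 2 := by
  have h1 : ∀ v, ‖ew x v - c‖ ^ 2 = (1 + ‖c‖ ^ 2) - 2 * (ew x v * (starRingEnd ℂ) c).re := by
    intro v
    rw [← Complex.normSq_eq_norm_sq, Complex.normSq_sub, Complex.normSq_eq_norm_sq,
      Complex.normSq_eq_norm_sq, ew_norm]
    ring
  have hi : Integrable (fun v => ew x v * (starRingEnd ℂ) c) Ψ := (ew_integrable Ψ x).mul_const _
  have hre : Integrable (fun v => (ew x v * (starRingEnd ℂ) c).re) Ψ := hi.re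
  simp_rw [h1]
  rw [integral_sub (integrable_const _) (hre.const_mul 2), integral_const, integral_const_mul]
  have h2 : ∫ v, (ew x v * (starRingEnd ℂ) c).re ∂Ψ = (charFn Ψ x * (starRingEnd ℂ) c).re := by
    have := integral_re hi
    simp only [RCLike.re_to_complex] at this
    rw [this, integral_mul_const, charFn_eq]
  rw [h2]
  unfold mm
  rw [← Complex.normSq_eq_norm_sq (charFn Ψ x - c), Complex.normSq_sub,
    Complex.normSq_eq_norm_sq, Complex.normSq_eq_norm_sq]
  simp
  ring

lemma IsCharFn.mm_nonneg {φ : E3 → ℂ} (h : IsCharFn φ) (x : E3) : 0 ≤ mm φ x := by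
  obtain ⟨Ψ, hΨ, rfl⟩ := h
  have := var_eq Ψ x (charFn Ψ x)
  simp only [sub_self, norm_zero] at this
  rw [zero_pow two_ne_zero, add_zero] at this
  rw [← this]
  positivity

lemma IsCharFn.neg {φ : E3 → ℂ} (h : IsCharFn φ) (x : E3) :
    φ (-x) = (starRingEnd ℂ) (φ x) := by
  obtain ⟨Ψ, hΨ, rfl⟩ := h
  exact charFn_neg Ψ x

lemma IsCharFn.mm_neg {φ : E3 → ℂ} (h : IsCharFn φ) (x : E3) : mm φ (-x) = mm φ x := by
  unfold mm
  rw [h.neg, Complex.norm_conj]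

lemma IsCharFn.zero {φ : E3 → ℂ} (h : IsCharFn φ) : φ 0 = 1 := by
  obtain ⟨Ψ, hΨ, rfl⟩ := h
  exact charFn_zero Ψ

lemma IsCharFn.mm_zero {φ : E3 → ℂ} (h : IsCharFn φ) : mm φ 0 = 0 := by
  simp [mm, h.zero]

lemma IsCharFn.norm_le {φ : E3 → ℂ} (h : IsCharFn φ) (x : E3) : ‖φ x‖ ≤ 1 := by
  have := h.mm_nonneg x
  unfold mm at this
  nlinarith [norm_nonneg (φ x)]

lemma IsCharFn.mm_add {φ : E3 → ℂ} (h : IsCharFn φ) (x y : E3) :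
    mm φ (x + y) ≤ 2 * mm φ x + 2 * mm φ y := by
  have hn := h.norm_le
  obtain ⟨Ψ, hΨ, rfl⟩ := h
  set c := charFn Ψ x with hc
  set d := charFn Ψ y with hd
  have hx := var_eq Ψ x c
  have hy := var_eq Ψ y d
  have hxy := var_eq Ψ (x + y) (c * d)
  rw [← hc, sub_self, norm_zero, zero_pow two_ne_zero, add_zero] at hx
  rw [← hd, sub_self, norm_zero, zero_pow two_ne_zero, add_zero] at hy
  rw [← hx, ← hy, ← integral_const_mul, ← integral_const_mul, ← integral_add
    ((ew_sub_sq_integrable Ψ x c).const_mul 2) ((ew_sub_sq_integrable Ψ y d).const_mul 2)]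
  have : mm (charFn Ψ) (x + y) ≤ ∫ v, ‖ew (x + y) v - c * d‖ ^ 2 ∂Ψ := by
    rw [hxy]; nlinarith [sq_nonneg ‖charFn Ψ (x + y) - c * d‖]
  refine this.trans (integral_mono (ew_sub_sq_integrable Ψ _ _)
    (((ew_sub_sq_integrable Ψ x c).const_mul 2).add
      ((ew_sub_sq_integrable Ψ y d).const_mul 2)) ?_)
  intro v
  have h1 : ‖ew (x + y) v - c * d‖ ≤ ‖ew x v - c‖ + ‖ew y v - d‖ := by
    rw [ew_add]
    calc ‖ew x v * ew y v - c * d‖ = ‖(ew x v - c) * ew y v + c * (ew y v - d)‖ := by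
          congr 1; ring
      _ ≤ ‖ew x v - c‖ * ‖ew y v‖ + ‖c‖ * ‖ew y v - d‖ := by
          refine (norm_add_le _ _).trans ?_
          rw [norm_mul, norm_mul]
      _ ≤ ‖ew x v - c‖ + ‖ew y v - d‖ := by
          rw [ew_norm, mul_one]
          gcongr
          have := hn x
          nlinarith [norm_nonneg (ew y v - d)]
  have h2 := norm_nonneg (ew (x + y) v - c * d)
  show ‖ew (x + y) v - c * d‖ ^ 2 ≤ 2 * ‖ew x v - c‖ ^ 2 + 2 * ‖ew y v - d‖ ^ 2
  nlinarith [sq_nonneg (‖ew x v - c‖ - ‖ew y v - d‖)]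

lemma ew_ae_eq (Ψ : Measure E3) [IsProbabilityMeasure Ψ] (x : E3)
    (hx : mm (charFn Ψ) x = 0) : ∀ᵐ v ∂Ψ, ew x v = charFn Ψ x := by
  have h := var_eq Ψ x (charFn Ψ x)
  rw [hx, sub_self, norm_zero, zero_pow two_ne_zero, add_zero] at h
  rw [integral_eq_zero_iff_of_nonneg (fun v => by positivity) (ew_sub_sq_integrable Ψ x _)] at h
  filter_upwards [h] with v hv
  simp only [Pi.zero_apply] at hv
  have := pow_eq_zero_iff two_ne_zero |>.1 hv
  exact sub_eq_zero.1 (norm_eq_zero.1 this)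

lemma IsCharFn.map_add_of {φ : E3 → ℂ} (h : IsCharFn φ) {x : E3} (hx : mm φ x = 0) (y : E3) :
    φ (x + y) = φ x * φ y := by
  obtain ⟨Ψ, hΨ, rfl⟩ := h
  rw [charFn_eq Ψ (x + y), charFn_eq Ψ y, ← integral_const_mul]
  refine integral_congr_ae ?_
  filter_upwards [ew_ae_eq Ψ x hx] with v hv
  rw [ew_add, hv]

lemma IsCharFn.norm_of {φ : E3 → ℂ} {x : E3} (hx : mm φ x = 0) : ‖φ x‖ = 1 := by
  unfold mm at hx
  nlinarith [norm_nonneg (φ x)]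

lemma IsCharFn.mm_add_of {φ : E3 → ℂ} (h : IsCharFn φ) {x : E3} (hx : mm φ x = 0) (y : E3) :
    mm φ (x + y) = mm φ y := by
  unfold mm
  rw [h.map_add_of hx, norm_mul, IsCharFn.norm_of hx, one_mul]

lemma dirac_of_mm_zero (Ψ : Measure E3) [IsProbabilityMeasure Ψ]
    (h0 : ∀ x, mm (charFn Ψ) x = 0) : ∃ v₀ : E3, Ψ {v₀} = 1 := by
  have hall : ∀ᵐ v ∂Ψ, ∀ (i : Fin 3) (k : ℕ),
      ew ((1 / 2 : ℝ) ^ k • EuclideanSpace.single i 1) v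
        = charFn Ψ ((1 / 2 : ℝ) ^ k • EuclideanSpace.single i 1) := by
    rw [ae_all_iff]; intro i
    rw [ae_all_iff]; intro k
    exact ew_ae_eq Ψ _ (h0 _)
  obtain ⟨v₀, hv₀⟩ := hall.exists
  refine ⟨v₀, ?_⟩
  have : ∀ᵐ v ∂Ψ, v ∈ ({v₀} : Set E3) := by
    filter_upwards [hall] with v hv
    rw [mem_singleton_iff]
    ext i
    have key : ∀ k : ℕ, Real.cos ((v i - v₀ i) * (1 / 2) ^ k) = 1 := by
      intro k
      have e := (hv i k).trans (hv₀ i k).symm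
      unfold ew at e
      have e2 : Complex.exp ((((v i - v₀ i) * (1 / 2) ^ k : ℝ) : ℂ) * Complex.I) = 1 := by
        have e3 := Complex.exp_sub (-(Complex.I * ((⟪v₀, (1 / 2 : ℝ) ^ k • EuclideanSpace.single i 1⟫ : ℝ) : ℂ))) (-(Complex.I * ((⟪v, (1 / 2 : ℝ) ^ k • EuclideanSpace.single i 1⟫ : ℝ) : ℂ)))
        rw [e, div_self (Complex.exp_ne_zero _)] at e3
        rw [← e3]
        congr 1
        rw [inner_smul_right, inner_smul_right, EuclideanSpace.inner_single_right,
          EuclideanSpace.inner_single_right]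
        simp
        ring
      rw [← Complex.exp_ofReal_mul_I_re, e2]; rfl
    obtain ⟨k, hk⟩ := exists_pow_lt_of_lt_one (show 0 < 1 / (|v i - v₀ i| + 1) by positivity)
      (show (1 / 2 : ℝ) < 1 by norm_num)
    have hb : |(v i - v₀ i) * (1 / 2) ^ k| < 1 := by
      rw [abs_mul, abs_of_pos (show (0 : ℝ) < (1 / 2) ^ k by positivity)]
      rw [lt_div_iff₀ (by positivity)] at hk
      nlinarith [show (0 : ℝ) < (1 / 2) ^ k by positivity]
    have hpi := Real.pi_gt_three
    rw [abs_lt] at hb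
    have := (Real.cos_eq_one_iff_of_lt_of_lt (by linarith) (by linarith)).1 (key k)
    have h3 : v i - v₀ i = 0 := by
      rcases mul_eq_zero.1 this with h | h
      · exact h
      · exact absurd h (by positivity)
    linarith
  exact (prob_compl_eq_zero_iff (measurableSet_singleton v₀)).1 this

/-- A linear isometry acting on the sphere. -/
def sphHomeo (L : E3 ≃ₗᵢ[ℝ] E3) : sphere (0 : E3) 1 ≃ₜ sphere (0 : E3) 1 where
  toFun σ := ⟨L σ, by simp⟩
  invFun σ := ⟨L.symm σ, by simp⟩
  left_inv σ := by ext1; simp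
  right_inv σ := by ext1; simp
  continuous_toFun := by fun_prop
  continuous_invFun := by fun_prop

open scoped Pointwise in
lemma sphHomeo_mp (L : E3 ≃ₗᵢ[ℝ] E3) : MeasurePreserving (sphHomeo L) sphμ sphμ := by
  refine ⟨(sphHomeo L).continuous.measurable, ?_⟩
  ext S hS
  rw [Measure.map_apply (sphHomeo L).continuous.measurable hS]
  unfold sphμ
  rw [Measure.toSphere_apply' _ hS,
    Measure.toSphere_apply' _ ((sphHomeo L).continuous.measurable hS)]
  congr 1
  have : Ioo (0 : ℝ) 1 • ((↑) '' (sphHomeo L ⁻¹' S) : Set E3)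
      = L ⁻¹' (Ioo (0 : ℝ) 1 • ((↑) '' S : Set E3)) := by
    ext x
    simp only [Set.mem_smul, Set.mem_image, Set.mem_preimage]
    constructor
    · rintro ⟨r, hr, _, ⟨σ, hσ, rfl⟩, rfl⟩
      exact ⟨r, hr, _, ⟨_, hσ, rfl⟩, by simp [sphHomeo]⟩
    · rintro ⟨r, hr, _, ⟨σ, hσ, rfl⟩, hx⟩
      refine ⟨r, hr, _, ⟨(sphHomeo L).symm σ, by simpa using hσ, rfl⟩, ?_⟩
      apply L.injective
      rw [← hx, L.map_smul]
      congr 1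
      exact congrArg Subtype.val ((sphHomeo L).apply_symm_apply σ)
  rw [this]
  exact (L.measurePreserving).measure_preimage_equiv (f := L.toHomeomorph.toMeasurableEquiv) _

lemma sphHomeo_lintegral (L : E3 ≃ₗᵢ[ℝ] E3) (G : sphere (0 : E3) 1 → ENNReal) :
    ∫⁻ σ, G (sphHomeo L σ) ∂sphμ = ∫⁻ σ, G σ ∂sphμ :=
  (sphHomeo_mp L).lintegral_comp_emb (sphHomeo L).measurableEmbedding G

lemma box_volume (B : OrthonormalBasis (Fin 3) ℝ E3) (l u : Fin 3 → ℝ) :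
    volume {x : E3 | ∀ i, ⟪B i, x⟫ ∈ Icc (l i) (u i)}
      = ∏ i, ENNReal.ofReal (u i - l i) := by
  have h1 : {x : E3 | ∀ i, ⟪B i, x⟫ ∈ Icc (l i) (u i)}
      = (fun x => (B.repr x).ofLp) ⁻¹' (Icc l u) := by
    ext x
    simp only [mem_ofPred_eq, Set.mem_preimage, Set.mem_Icc, Pi.le_def, B.repr_apply_apply]
    exact forall_and
  rw [h1]
  have h2 : MeasurePreserving (fun x : E3 => (B.repr x).ofLp) volume volume :=
    (PiLp.volume_preserving_ofLp (Fin 3)).comp B.measurePreserving_repr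
  rw [h2.measure_preimage measurableSet_Icc.nullMeasurableSet, Real.volume_Icc_pi]

lemma kernel_lower {b : ℝ → ℝ} {s K : ℝ} (hs0 : 0 < s) (hK : 0 < K) (h : KernelSingular b s K) :
    ∃ θ₀ > 0, ∀ θ M : ℝ, 0 < θ → θ ≤ M → M < θ₀ → K / 2 * M ^ (-(2 + 2 * s)) ≤ b (Real.cos θ) := by
  have h1 : ∀ᶠ θ in 𝓝[>] (0 : ℝ), K / 2 < b (Real.cos θ) * θ ^ (2 + 2 * s) :=
    h.eventually (lt_mem_nhds (by linarith))
  rw [eventually_nhdsWithin_iff, Metric.eventually_nhds_iff] at h1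
  obtain ⟨θ₀, h0, h1⟩ := h1
  refine ⟨θ₀, h0, fun θ M hθ hM hM' => ?_⟩
  have h2 := h1 (y := θ) (by rw [Real.dist_eq, sub_zero, abs_of_pos hθ]; linarith) hθ
  have hp : 0 < θ ^ (2 + 2 * s) := Real.rpow_pos_of_pos hθ _
  calc K / 2 * M ^ (-(2 + 2 * s)) ≤ K / 2 * θ ^ (-(2 + 2 * s)) := by
        gcongr ?_ * ?_
        exact Real.rpow_le_rpow_of_nonpos hθ hM (by linarith)
    _ ≤ b (Real.cos θ) := by
        rw [Real.rpow_neg hθ.le, ← div_eq_mul_inv, div_le_iff₀ hp]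
        exact h2.le

open scoped Pointwise in
lemma patch_measure (a ε : ℝ) (ha : 0 < a) (hε : 0 < ε) :
    ∃ R ≥ 1, ∃ c > 0, ∀ B : OrthonormalBasis (Fin 3) ℝ E3, ∀ r ≥ R,
      ENNReal.ofReal (c / r ^ 2) ≤ sphμ {σ | r * ⟪B 1, (σ : E3)⟫ ∈ Icc a (a + ε) ∧
        ⟪B 2, (σ : E3)⟫ ∈ Icc 0 (2 / r) ∧ 0 < ⟪B 0, (σ : E3)⟫} := by
  obtain ⟨δ, hδ, hδ1, hδ2⟩ : ∃ δ > 0, δ ≤ 1 / 8 ∧ 8 * a * δ ≤ ε := by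
    refine ⟨min (1 / 8) (ε / (8 * a)), by positivity, min_le_left _ _, ?_⟩
    calc 8 * a * min (1 / 8) (ε / (8 * a)) ≤ 8 * a * (ε / (8 * a)) := by
          gcongr; exact min_le_right _ _
      _ = ε := by field_simp
  set M := a + ε + 2 with hM
  refine ⟨max 1 (M / δ), le_max_left _ _, δ * (ε / 4), by positivity, fun B r hr => ?_⟩
  have hr1 : 1 ≤ r := (le_max_left _ _).trans hr
  have hr2 : M / δ ≤ r := (le_max_right _ _).trans hr
  have hr0 : 0 < r := by linarith
  have hMr : M ≤ δ * r := by rw [div_le_iff₀ hδ] at hr2; linarith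
  have hmeas : MeasurableSet {σ : sphere (0 : E3) 1 | r * ⟪B 1, (σ : E3)⟫ ∈ Icc a (a + ε) ∧
        ⟪B 2, (σ : E3)⟫ ∈ Icc 0 (2 / r) ∧ 0 < ⟪B 0, (σ : E3)⟫} := by
    have c0 : ∀ i, Continuous fun σ : sphere (0 : E3) 1 => ⟪B i, (σ : E3)⟫ := fun i => by fun_prop
    refine MeasurableSet.inter ?_ (MeasurableSet.inter ?_ ?_)
    · exact ((c0 1).const_smul r).measurable measurableSet_Icc
    · exact (c0 2).measurable measurableSet_Icc
    · exact (c0 0).measurable measurableSet_Ioi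
  unfold sphμ
  rw [Measure.toSphere_apply' _ hmeas]
  set l : Fin 3 → ℝ := ![1 / 2, a * (1 / 2 + 2 * δ) / r, 0] with hl
  set u : Fin 3 → ℝ := ![1 / 2 + δ, (a + ε) / 2 / r, 1 / r] with hu
  have hvol := box_volume B l u
  have hsub : {x : E3 | ∀ i, ⟪B i, x⟫ ∈ Icc (l i) (u i)} ⊆ Ioo (0 : ℝ) 1 • ((↑) '' {σ : sphere (0 : E3) 1 | r * ⟪B 1, (σ : E3)⟫ ∈ Icc a (a + ε) ∧
        ⟪B 2, (σ : E3)⟫ ∈ Icc 0 (2 / r) ∧ 0 < ⟪B 0, (σ : E3)⟫} : Set E3) := by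
    intro x hx
    have hx0 := hx 0
    have hx1 := hx 1
    have hx2 := hx 2
    simp only [hl, hu, Matrix.cons_val_zero, Matrix.cons_val_one, Matrix.cons_val] at hx0 hx1 hx2
    rw [Set.mem_Icc] at hx0 hx1 hx2
    rw [div_le_iff₀ hr0, le_div_iff₀ hr0] at hx1
    rw [le_div_iff₀ hr0] at hx2
    have hnorm : ‖x‖ ^ 2 = ⟪B 0, x⟫ ^ 2 + ⟪B 1, x⟫ ^ 2 + ⟪B 2, x⟫ ^ 2 := by
      have := B.sum_sq_norm_inner_right x
      rw [Fin.sum_univ_three] at this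
      simpa using this.symm
    set p := ⟪B 0, x⟫
    set q := ⟪B 1, x⟫
    set w := ⟪B 2, x⟫
    set ρ := ‖x‖ with hρ
    have hρ0 : 0 ≤ ρ := norm_nonneg x
    have hρ1 : 1 / 2 ≤ ρ := by nlinarith [sq_nonneg q, sq_nonneg w]
    have hq0 : 0 ≤ q * r := le_trans (by positivity) hx1.1
    have hqw : q ^ 2 + w ^ 2 ≤ δ ^ 2 := by
      have e1 : (q * r) ^ 2 ≤ ((a + ε) / 2) ^ 2 := by gcongr; exact hx1.2
      have e2 : (w * r) ^ 2 ≤ 1 ^ 2 := by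
        have : 0 ≤ w * r := mul_nonneg hx2.1 hr0.le
        gcongr; exact hx2.2
      have e3 : M ^ 2 ≤ (δ * r) ^ 2 := by gcongr
      have e4 : (q ^ 2 + w ^ 2) * r ^ 2 ≤ δ ^ 2 * r ^ 2 := by nlinarith
      exact le_of_mul_le_mul_right e4 (by positivity)
    have hρ2 : ρ ≤ 1 / 2 + 2 * δ := by
      by_contra hcon
      push Not at hcon
      nlinarith
    have hρpos : 0 < ρ := by linarith
    refine Set.mem_smul.2 ⟨ρ, ⟨hρpos, by linarith⟩, ρ⁻¹ • x, ?_, ?_⟩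
    · refine ⟨⟨ρ⁻¹ • x, ?_⟩, ?_, rfl⟩
      · rw [mem_sphere_zero_iff_norm, norm_smul, norm_inv, Real.norm_of_nonneg hρ0, ← hρ]
        exact inv_mul_cancel₀ hρpos.ne'
      · simp only [mem_ofPred_eq, inner_smul_right]
        refine ⟨⟨?_, ?_⟩, ⟨?_, ?_⟩, ?_⟩
        · rw [show r * (ρ⁻¹ * q) = (q * r) / ρ by ring, le_div_iff₀ hρpos]
          nlinarith
        · rw [show r * (ρ⁻¹ * q) = (q * r) / ρ by ring, div_le_iff₀ hρpos]
          nlinarith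
        · have := hx2.1
          positivity
        · rw [show ρ⁻¹ * w = w / ρ by ring, div_le_div_iff₀ hρpos hr0]
          linarith
        · have : 0 < p := by linarith
          positivity
    · rw [smul_smul, mul_inv_cancel₀ hρpos.ne', one_smul]
  have hstep := measure_mono (μ := (volume : Measure E3)) hsub
  rw [hvol, Fin.prod_univ_three] at hstep
  refine le_trans ?_ (mul_le_mul' (show (1 : ENNReal) ≤ (Module.finrank ℝ E3 : ENNReal) by
    simp) hstep)
  rw [one_mul, ← ENNReal.ofReal_mul, ← ENNReal.ofReal_mul]
  · apply ENNReal.ofReal_le_ofReal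
    simp only [hl, hu, Matrix.cons_val_zero, Matrix.cons_val_one, Matrix.cons_val]
    rw [show (1 / 2 + δ - 1 / 2) * ((a + ε) / 2 / r - a * (1 / 2 + 2 * δ) / r) * (1 / r - 0)
      = δ * (ε / 2 - 2 * a * δ) / r ^ 2 by field_simp; ring]
    gcongr
    nlinarith
  · simp only [hl, hu, Matrix.cons_val_zero, Matrix.cons_val_one, Matrix.cons_val]
    apply mul_nonneg
    · linarith
    · rw [← sub_div]
      apply div_nonneg _ hr0.le
      nlinarith
  · simp only [hl, hu, Matrix.cons_val_zero]
    linarith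

lemma exists_onb (ω f : E3) (hω : ‖ω‖ = 1) (hf : ‖f‖ = 1) (h : ⟪ω, f⟫ = 0) :
    ∃ B : OrthonormalBasis (Fin 3) ℝ E3, B 0 = ω ∧ B 1 = f := by
  have ho : Orthonormal ℝ (({0, 1} : Set (Fin 3)).domRestrict ![ω, f, 0]) := by
    rw [orthonormal_iff_ite]
    rintro ⟨i, hi⟩ ⟨j, hj⟩
    have h' : ⟪f, ω⟫ = 0 := by rw [real_inner_comm]; exact h
    simp only [mem_insert_iff, mem_singleton_iff] at hi hj
    rcases hi with rfl | rfl <;> rcases hj with rfl | rfl <;> simp [Set.domRestrict, hω, hf, h, h']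
  obtain ⟨B, hB⟩ := ho.exists_orthonormalBasis_extension_of_card_eq (by simp)
  exact ⟨B, by simpa using hB 0 (by simp), by simpa using hB 1 (by simp)⟩

lemma patch_lower {b : ℝ → ℝ} {s K : ℝ} (hs0 : 0 < s) (hK : 0 < K)
    (h : KernelSingular b s K) (a ε : ℝ) (ha : 0 < a) (hε : 0 < ε) :
    ∃ R ≥ 1, ∃ c > 0, ∀ ω f : E3, ‖ω‖ = 1 → ‖f‖ = 1 → ⟪ω, f⟫ = 0 → ∀ r ≥ R,
      ENNReal.ofReal (c * r ^ (2 * s)) ≤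
        ∫⁻ σ in {σ | r * ⟪f, (σ : E3)⟫ ∈ Icc a (a + ε)}, ENNReal.ofReal (b ⟪ω, (σ : E3)⟫) ∂sphμ := by
  obtain ⟨R, hR, c, hc, hpm⟩ := patch_measure a ε ha hε
  obtain ⟨θ₀, hθ₀, hker⟩ := kernel_lower hs0 hK h
  set M := a + ε + 2 with hM
  have hMpos : 0 < M := by positivity
  refine ⟨max R (2 * M / θ₀ + 1 + M), hR.trans (le_max_left _ _),
    K / 2 * (2 * M) ^ (-(2 + 2 * s)) * c, by positivity, ?_⟩
  intro ω f hω hf hωf r hr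
  obtain ⟨B, hB0, hB1⟩ := exists_onb ω f hω hf hωf
  have hrR : R ≤ r := (le_max_left _ _).trans hr
  have hr2 : 2 * M / θ₀ + 1 + M ≤ r := (le_max_right _ _).trans hr
  have hr0 : 0 < r := by linarith
  have hfrac : 0 < 2 * M / θ₀ := by positivity
  have hMr : 2 * M / r < θ₀ := by
    rw [div_lt_iff₀ hr0, mul_comm θ₀ r, ← div_lt_iff₀ hθ₀]; linarith
  have hpm' := hpm B r hrR
  rw [hB0, hB1] at hpm'
  set W := {σ : sphere (0 : E3) 1 | r * ⟪f, (σ : E3)⟫ ∈ Icc a (a + ε) ∧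
        ⟪B 2, (σ : E3)⟫ ∈ Icc 0 (2 / r) ∧ 0 < ⟪ω, (σ : E3)⟫} with hW
  have hWm : MeasurableSet W := by
    refine MeasurableSet.inter ?_ (MeasurableSet.inter ?_ ?_)
    · exact (show Continuous fun σ : sphere (0 : E3) 1 => r * ⟪f, (σ : E3)⟫ by fun_prop).measurable measurableSet_Icc
    · exact (show Continuous fun σ : sphere (0 : E3) 1 => ⟪B 2, (σ : E3)⟫ by fun_prop).measurable measurableSet_Icc
    · exact (show Continuous fun σ : sphere (0 : E3) 1 => ⟪ω, (σ : E3)⟫ by fun_prop).measurable measurableSet_Ioi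
  have hsub : W ⊆ {σ | r * ⟪f, (σ : E3)⟫ ∈ Icc a (a + ε)} := fun σ hσ => hσ.1
  have hlow : ∀ σ ∈ W, K / 2 * (2 * M / r) ^ (-(2 + 2 * s)) ≤ b ⟪ω, (σ : E3)⟫ := by
    rintro σ ⟨h1, h2, h3⟩
    have hnorm : (1 : ℝ) = ⟪ω, (σ : E3)⟫ ^ 2 + ⟪f, (σ : E3)⟫ ^ 2 + ⟪B 2, (σ : E3)⟫ ^ 2 := by
      have := B.sum_sq_norm_inner_right (σ : E3)
      rw [Fin.sum_univ_three, hB0, hB1] at this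
      simpa using this.symm
    rw [Set.mem_Icc] at h1 h2
    rw [le_div_iff₀ hr0] at h2
    set p := ⟪ω, (σ : E3)⟫
    set q := ⟪f, (σ : E3)⟫
    set w := ⟪B 2, (σ : E3)⟫
    have hq : 0 < q := by
      by_contra hcon
      push Not at hcon
      nlinarith
    have hp1 : p < 1 := by nlinarith [sq_nonneg w, mul_pos hq hq]
    have hθ : 0 < Real.arccos p := Real.arccos_pos.2 hp1
    have hθ2 : Real.arccos p ≤ π / 2 := Real.arccos_le_pi_div_two.2 h3.le
    have hcos : Real.cos (Real.arccos p) = p := Real.cos_arccos (by linarith) hp1.le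
    have hsin := Real.mul_le_sin hθ.le hθ2
    have hsin2 : Real.sin (Real.arccos p) ≤ M / r := by
      rw [Real.sin_arccos]
      apply Real.sqrt_le_iff.2 ⟨by positivity, ?_⟩
      rw [div_pow, le_div_iff₀ (by positivity)]
      have e1 : (r * q) ^ 2 ≤ (a + ε) ^ 2 := by
        have : 0 ≤ r * q := by positivity
        gcongr; exact h1.2
      have e2 : (w * r) ^ 2 ≤ 2 ^ 2 := by
        have : 0 ≤ w * r := mul_nonneg h2.1 hr0.le
        gcongr; exact h2.2
      nlinarith
    have hle : Real.arccos p ≤ 2 * M / r := by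
      have hpi := Real.pi_le_four
      have hpi0 := Real.pi_pos
      have : 2 / 4 * Real.arccos p ≤ 2 / π * Real.arccos p := by gcongr
      have : Real.arccos p ≤ 2 * (M / r) := by linarith
      rw [mul_div_assoc]; exact this
    have := hker _ _ hθ hle hMr
    rwa [hcos] at this
  calc ENNReal.ofReal (K / 2 * (2 * M) ^ (-(2 + 2 * s)) * c * r ^ (2 * s))
      = ENNReal.ofReal (K / 2 * (2 * M / r) ^ (-(2 + 2 * s))) * ENNReal.ofReal (c / r ^ 2) := by
        rw [← ENNReal.ofReal_mul (by positivity)]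
        congr 1
        rw [Real.div_rpow (by positivity) hr0.le, Real.rpow_neg hr0.le (2 + 2 * s),
          Real.rpow_add hr0, Real.rpow_two]
        have : 0 < r ^ (2 * s) := Real.rpow_pos_of_pos hr0 _
        field_simp
    _ ≤ ENNReal.ofReal (K / 2 * (2 * M / r) ^ (-(2 + 2 * s))) * sphμ W := by gcongr
    _ = ∫⁻ σ in W, ENNReal.ofReal (K / 2 * (2 * M / r) ^ (-(2 + 2 * s))) ∂sphμ := by
        rw [setLIntegral_const]
    _ ≤ ∫⁻ σ in W, ENNReal.ofReal (b ⟪ω, (σ : E3)⟫) ∂sphμ :=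
        setLIntegral_mono' hWm fun σ hσ => ENNReal.ofReal_le_ofReal (hlow σ hσ)
    _ ≤ _ := lintegral_mono_set hsub

lemma refl_formula (f x : E3) (hf : ‖f‖ = 1) :
    ((ℝ ∙ f)ᗮ).reflection x = x - (2 * ⟪f, x⟫) • f := by
  rw [Submodule.reflection_orthogonal_apply, Submodule.reflection_singleton_apply, hf]
  simp only [one_pow, RCLike.ofReal_real_eq_id, id_eq, div_one]
  module

lemma xiMinus_cont (ξ : E3) : Continuous (xiMinus ξ) := by
  unfold xiMinus; fun_prop

lemma G_meas {φ : E3 → ℂ} (hφc : Continuous φ) {b : ℝ → ℝ} (hb : Measurable b) (ξ : E3) :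
    Measurable fun σ : sphere (0 : E3) 1 =>
      ENNReal.ofReal (b (⟪ξ, (σ : E3)⟫ / ‖ξ‖) * (1 - ‖φ (xiMinus ξ σ)‖)) := by
  have h1 : Measurable fun σ : sphere (0 : E3) 1 => b (⟪ξ, (σ : E3)⟫ / ‖ξ‖) :=
    hb.comp (show Continuous fun σ : sphere (0 : E3) 1 => ⟪ξ, (σ : E3)⟫ / ‖ξ‖ by fun_prop).measurable
  have h2 : Measurable fun σ : sphere (0 : E3) 1 => 1 - ‖φ (xiMinus ξ σ)‖ :=
    (continuous_const.sub ((hφc.comp (xiMinus_cont ξ)).norm)).measurable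
  exact (h1.mul h2).ennreal_ofReal

lemma refl_lower {φ : E3 → ℂ} (hφ : IsCharFn φ) (hφc : Continuous φ)
    {b : ℝ → ℝ} (hb : Measurable b) (hb0 : ∀ x, 0 ≤ b x) (ξ f : E3) (hf : ‖f‖ = 1)
    (hξf : ⟪ξ, f⟫ = 0) (m0 a ε : ℝ) (hm0 : 0 ≤ m0)
    (hm : ∀ u ∈ Icc a (a + ε), m0 ≤ mm φ (u • f)) :
    ENNReal.ofReal (m0 / 8) * ∫⁻ σ in {σ | ‖ξ‖ * ⟪f, (σ : E3)⟫ ∈ Icc a (a + ε)},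
        ENNReal.ofReal (b (⟪ξ, (σ : E3)⟫ / ‖ξ‖)) ∂sphμ
      ≤ ∫⁻ σ, ENNReal.ofReal (b (⟪ξ, (σ : E3)⟫ / ‖ξ‖) * (1 - ‖φ (xiMinus ξ σ)‖)) ∂sphμ := by
  set G : sphere (0 : E3) 1 → ENNReal := fun σ =>
    ENNReal.ofReal (b (⟪ξ, (σ : E3)⟫ / ‖ξ‖) * (1 - ‖φ (xiMinus ξ σ)‖)) with hG
  set L := ((ℝ ∙ f)ᗮ).reflection with hL
  have hGm : Measurable G := G_meas hφc hb ξ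
  have hW : MeasurableSet {σ : sphere (0 : E3) 1 | ‖ξ‖ * ⟪f, (σ : E3)⟫ ∈ Icc a (a + ε)} :=
    (show Continuous fun σ : sphere (0 : E3) 1 => ‖ξ‖ * ⟪f, (σ : E3)⟫ by
      fun_prop).measurable measurableSet_Icc
  have hpt : ∀ σ ∈ {σ : sphere (0 : E3) 1 | ‖ξ‖ * ⟪f, (σ : E3)⟫ ∈ Icc a (a + ε)},
      ENNReal.ofReal (m0 / 4) * ENNReal.ofReal (b (⟪ξ, (σ : E3)⟫ / ‖ξ‖))
        ≤ G σ + G (sphHomeo L σ) := by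
    intro σ hσ
    have hin : ⟪ξ, ((sphHomeo L σ : sphere (0 : E3) 1) : E3)⟫ = ⟪ξ, (σ : E3)⟫ := by
      show ⟪ξ, L (σ : E3)⟫ = _
      rw [hL, refl_formula f _ hf, inner_sub_right, inner_smul_right, hξf]; ring
    have hd : xiMinus ξ (sphHomeo L σ) + -xiMinus ξ σ = (‖ξ‖ * ⟪f, (σ : E3)⟫) • f := by
      unfold xiMinus
      show (1 / 2 : ℝ) • ξ - (‖ξ‖ / 2) • (L (σ : E3)) + -((1 / 2 : ℝ) • ξ - (‖ξ‖ / 2) • (σ : E3)) = _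
      rw [hL, refl_formula f _ hf]
      module
    have h1 := hφ.mm_add (xiMinus ξ (sphHomeo L σ)) (-xiMinus ξ σ)
    rw [hd, hφ.mm_neg] at h1
    have h2 := hm _ hσ
    have hn : ∀ x, mm φ x ≤ 2 * (1 - ‖φ x‖) := fun x => by
      have := hφ.norm_le x
      unfold mm
      nlinarith [norm_nonneg (φ x)]
    have h3 := hn (xiMinus ξ (sphHomeo L σ))
    have h4 := hn (xiMinus ξ σ)
    have hB := hb0 (⟪ξ, (σ : E3)⟫ / ‖ξ‖)
    have e1 : 0 ≤ 1 - ‖φ (xiMinus ξ σ)‖ := sub_nonneg.2 (hφ.norm_le _)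
    have e2 : 0 ≤ 1 - ‖φ (xiMinus ξ (sphHomeo L σ))‖ := sub_nonneg.2 (hφ.norm_le _)
    simp only [hG]
    rw [hin, ← ENNReal.ofReal_add (mul_nonneg hB e1) (mul_nonneg hB e2),
      ← ENNReal.ofReal_mul (by positivity), ← mul_add, mul_comm (m0 / 4)]
    apply ENNReal.ofReal_le_ofReal
    gcongr
    linarith
  have h2 : ENNReal.ofReal (m0 / 4) * ∫⁻ σ in {σ | ‖ξ‖ * ⟪f, (σ : E3)⟫ ∈ Icc a (a + ε)},
        ENNReal.ofReal (b (⟪ξ, (σ : E3)⟫ / ‖ξ‖)) ∂sphμ ≤ 2 * ∫⁻ σ, G σ ∂sphμ := by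
    rw [← lintegral_const_mul' _ _ ENNReal.ofReal_ne_top]
    refine (setLIntegral_mono' hW hpt).trans ((setLIntegral_le_lintegral _ _).trans ?_)
    rw [lintegral_add_left hGm, sphHomeo_lintegral, two_mul]
  have h4 : ENNReal.ofReal (m0 / 4) = 2 * ENNReal.ofReal (m0 / 8) := by
    rw [show (2 : ENNReal) = ENNReal.ofReal 2 by simp, ← ENNReal.ofReal_mul (by norm_num)]
    congr 1; ring
  rw [h4, mul_assoc] at h2
  exact (ENNReal.mul_le_mul_iff_right (by simp) (by simp)).1 h2

lemma local_coercive {b : ℝ → ℝ} {s K : ℝ} (hs0 : 0 < s) (hK : 0 < K)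
    (hb : Measurable b) (hb0 : ∀ x, 0 ≤ b x) (hsing : KernelSingular b s K)
    (ψ : ℝ → E3 → ℂ) (hψ : ∀ t ≥ 0, IsCharFn (ψ t)) (hψc : ∀ t ≥ 0, Continuous (ψ t))
    (P : Submodule ℝ E3) (f₀ : E3) (hf₀ : ‖f₀‖ = 1) (a δ T c : ℝ) (ha : 0 < a) (hδ : 0 < δ)
    (hc : 0 < c)
    (hloc : ∀ x ∈ P, ‖x - a • f₀‖ < δ → ∀ t ∈ Icc 0 T, c * t ≤ mm (ψ t) x) :
    ∃ η > 0, ∃ R ≥ 1, ∃ c' > 0, ∀ f ∈ P, ‖f‖ = 1 → ‖f - f₀‖ < η → ∀ ξ : E3, ⟪ξ, f⟫ = 0 →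
      R ≤ ‖ξ‖ → ∀ t ∈ Icc 0 T, ENNReal.ofReal (c' * t * ‖ξ‖ ^ (2 * s)) ≤
        ∫⁻ σ, ENNReal.ofReal (b (⟪ξ, (σ : E3)⟫ / ‖ξ‖) * (1 - ‖ψ t (xiMinus ξ σ)‖)) ∂sphμ := by
  obtain ⟨R, hR, c₁, hc₁, hpatch⟩ := patch_lower hs0 hK hsing a (δ / 2) ha (by positivity)
  refine ⟨δ / (2 * a), by positivity, R, hR, c / 8 * c₁, by positivity, ?_⟩
  intro f hfP hf hff ξ hξf hξ t ht
  have ht0 : 0 ≤ t := ht.1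
  have hξ0 : 0 < ‖ξ‖ := by linarith
  have hω : ‖(‖ξ‖⁻¹ • ξ)‖ = 1 := by
    rw [norm_smul, norm_inv, norm_norm, inv_mul_cancel₀ hξ0.ne']
  have h1 := hpatch (‖ξ‖⁻¹ • ξ) f hω hf (by rw [inner_smul_left, hξf]; simp) ‖ξ‖ hξ
  have h2 := refl_lower (hψ t ht0) (hψc t ht0) hb hb0 ξ f hf hξf (c * t) a (δ / 2)
    (by positivity) (by
      intro u hu
      refine hloc _ (P.smul_mem u hfP) ?_ t ht
      have : u • f - a • f₀ = (u - a) • f + a • (f - f₀) := by module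
      rw [this]
      refine (norm_add_le _ _).trans_lt ?_
      rw [norm_smul, norm_smul, hf, Real.norm_of_nonneg ha.le, Real.norm_of_nonneg (by linarith [hu.1])]
      rw [lt_div_iff₀ (by positivity)] at hff
      have := hu.2
      nlinarith)
  refine le_trans ?_ h2
  have h3 : ∀ σ : sphere (0 : E3) 1, ⟪‖ξ‖⁻¹ • ξ, (σ : E3)⟫ = ⟪ξ, (σ : E3)⟫ / ‖ξ‖ := fun σ => by
    rw [real_inner_smul_left]; field_simp
  simp_rw [h3] at h1
  rw [show c / 8 * c₁ * t * ‖ξ‖ ^ (2 * s) = (c * t / 8) * (c₁ * ‖ξ‖ ^ (2 * s)) by ring,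
    ENNReal.ofReal_mul (by positivity)]
  gcongr

/-- A Steinhaus type lemma. -/
lemma steinhaus (B : ℕ → Set ℝ) (hmono : Monotone B) (hmeas : ∀ n, MeasurableSet (B n))
    (ρ : ℝ) (hρ : 0 < ρ) (hcov : Icc 0 ρ ⊆ ⋃ n, B n) :
    ∃ n, ∀ u ∈ Icc 0 (ρ / 4), ∃ y, y ∈ B n ∧ y + u ∈ B n := by
  have hlim : Tendsto (fun n => volume (B n ∩ Icc 0 ρ)) atTop (𝓝 (volume (⋃ n, (B n ∩ Icc 0 ρ)))) :=
    tendsto_measure_iUnion_atTop (fun i j h => inter_subset_inter_left _ (hmono h))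
  have hU : (⋃ n, (B n ∩ Icc 0 ρ)) = Icc 0 ρ := by
    rw [← iUnion_inter, inter_eq_right]; exact hcov
  rw [hU, Real.volume_Icc, sub_zero] at hlim
  have hev := hlim.eventually (lt_mem_nhds (show ENNReal.ofReal (3 / 4 * ρ) < ENNReal.ofReal ρ from
    (ENNReal.ofReal_lt_ofReal_iff hρ).2 (by linarith)))
  obtain ⟨n, hn⟩ := hev.exists
  refine ⟨n, fun u hu => ?_⟩
  by_contra hcon
  push Not at hcon
  set A := B n ∩ Icc 0 ρ with hA
  have hAm : MeasurableSet A := (hmeas n).inter measurableSet_Icc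
  have hdisj : Disjoint A ((fun y => y + u) ⁻¹' A) := by
    rw [Set.disjoint_left]
    intro y hy hy'
    exact hcon y hy.1 hy'.1
  have hvol : volume ((fun y => y + u) ⁻¹' A) = volume A := measure_preimage_add_right _ _ _
  have hun : volume (A ∪ ((fun y => y + u) ⁻¹' A)) = volume A + volume A := by
    rw [measure_union hdisj ((measurable_add_const u) hAm), hvol]
  have hsub : A ∪ ((fun y => y + u) ⁻¹' A) ⊆ Icc (-(ρ / 4)) ρ := by
    rintro y (hy | hy)
    · exact ⟨by linarith [hy.2.1], hy.2.2⟩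
    · have h1 := hy.2.1
      have h2 := hy.2.2
      exact ⟨by linarith [hu.2], by linarith [hu.1]⟩
  have h1 := measure_mono (μ := volume) hsub
  rw [hun, Real.volume_Icc] at h1
  have h2 := (ENNReal.add_lt_add hn hn).trans_le h1
  rw [← ENNReal.ofReal_add (by positivity) (by positivity)] at h2
  have := (ENNReal.ofReal_lt_ofReal_iff (by linarith)).1 h2
  linarith

/-- The subspace of directions along which `|φ| = 1`. -/
def degV (φ : E3 → ℂ) (h : IsCharFn φ) : Submodule ℝ E3 where
  carrier := {x | ∀ a : ℝ, mm φ (a • x) = 0}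
  zero_mem' := by
    intro a
    rw [smul_zero]; exact h.mm_zero
  add_mem' := by
    intro x y hx hy a
    rw [smul_add, h.mm_add_of (hx a)]
    exact hy a
  smul_mem' := by
    intro c x hx a
    rw [smul_smul]
    exact hx _

lemma degV_mm {φ : E3 → ℂ} {h : IsCharFn φ} {x : E3} (hx : x ∈ degV φ h) : mm φ x = 0 := by
  have := hx 1
  rwa [one_smul] at this

/-- The initial time derivative of the defect. -/
def DD (b : ℝ → ℝ) (φ : E3 → ℂ) (x : E3) : ℝ :=
  2 * ∫ σ, b (⟪x, (σ : E3)⟫ / ‖x‖) * mm φ (xiMinus x σ) ∂sphμ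

lemma deriv_mm {b : ℝ → ℝ} {ψ : ℝ → E3 → ℂ} {ψ₀ : E3 → ℂ} (hψ : IsBobylevSolution b ψ ψ₀)
    (x : E3) (hx : mm (ψ 0) x = 0) :
    Integrable (fun σ : sphere (0 : E3) 1 => b (⟪x, (σ : E3)⟫ / ‖x‖) * mm (ψ 0) (xiMinus x σ)) sphμ ∧
    HasDerivWithinAt (fun t => mm (ψ t) x) (DD b (ψ 0) x) (Ici 0) 0 := by
  have hch := hψ.isCharFn 0 le_rfl
  have hn := IsCharFn.norm_of hx
  have hcc : (starRingEnd ℂ) (ψ 0 x) * ψ 0 x = 1 := by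
    rw [mul_comm, Complex.mul_conj, Complex.normSq_eq_norm_sq, hn]; simp
  have key : ∀ σ, (starRingEnd ℂ) (ψ 0 x) * bobylevIntegrand b ψ 0 x σ
      = -((b (⟪x, (σ : E3)⟫ / ‖x‖) * mm (ψ 0) (xiMinus x σ) : ℝ) : ℂ) := by
    intro σ
    have hp : xiPlus x σ = x + -(xiMinus x σ) := by unfold xiPlus xiMinus; module
    unfold bobylevIntegrand
    rw [hp, hch.map_add_of hx, hch.neg]
    have h2 : (starRingEnd ℂ) (ψ 0 (xiMinus x σ)) * ψ 0 (xiMinus x σ)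
        = ((‖ψ 0 (xiMinus x σ)‖ ^ 2 : ℝ) : ℂ) := by
      rw [mul_comm, Complex.mul_conj, Complex.normSq_eq_norm_sq]
    unfold mm
    push_cast at h2 ⊢
    calc _ = (b (⟪x, (σ : E3)⟫ / ‖x‖) : ℂ) * (((starRingEnd ℂ) (ψ 0 x) * ψ 0 x) *
          ((starRingEnd ℂ) (ψ 0 (xiMinus x σ)) * ψ 0 (xiMinus x σ))
            - (starRingEnd ℂ) (ψ 0 x) * ψ 0 x) := by ring
      _ = _ := by rw [hcc, h2]; ring
  have hintg := (hψ.integrable 0 le_rfl x).const_mul ((starRingEnd ℂ) (ψ 0 x))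
  simp_rw [key] at hintg
  have hintg2 : Integrable (fun σ : sphere (0 : E3) 1 => b (⟪x, (σ : E3)⟫ / ‖x‖) * mm (ψ 0) (xiMinus x σ)) sphμ := by
    have := hintg.neg.re
    simpa using this
  refine ⟨hintg2, ?_⟩
  have hd := (hψ.eq 0 le_rfl x).norm_sq
  have hd2 := hd.const_sub 1
  refine hd2.congr_deriv ?_
  have e : (starRingEnd ℂ) (ψ 0 x) * (∫ σ, bobylevIntegrand b ψ 0 x σ ∂sphμ)
      = -((∫ σ, b (⟪x, (σ : E3)⟫ / ‖x‖) * mm (ψ 0) (xiMinus x σ) ∂sphμ : ℝ) : ℂ) := by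
    rw [← integral_const_mul]
    simp_rw [key]
    rw [integral_neg, integral_complex_ofReal]
  have e2 : ⟪ψ 0 x, ∫ σ, bobylevIntegrand b ψ 0 x σ ∂sphμ⟫
      = -(∫ σ, b (⟪x, (σ : E3)⟫ / ‖x‖) * mm (ψ 0) (xiMinus x σ) ∂sphμ) := by
    rw [Complex.inner, mul_comm, e]
    simp
  rw [e2]
  unfold DD
  ring

lemma mm_le_of {b : ℝ → ℝ} {ψ : ℝ → E3 → ℂ} {ψ₀ : E3 → ℂ} (hψ : IsBobylevSolution b ψ ψ₀)
    (x : E3) (hx : mm (ψ 0) x = 0) (l u : ℝ) (hl : l < DD b (ψ 0) x) (hu : DD b (ψ 0) x < u) :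
    ∃ T > 0, ∀ t ∈ Icc 0 T, l * t ≤ mm (ψ t) x ∧ mm (ψ t) x ≤ u * t := by
  have h := (deriv_mm hψ x hx).2
  rw [hasDerivWithinAt_iff_tendsto_slope] at h
  have h1 := h.eventually (Ioo_mem_nhds hl hu)
  rw [eventually_nhdsWithin_iff, Metric.eventually_nhds_iff] at h1
  obtain ⟨δ, hδ, h1⟩ := h1
  refine ⟨δ / 2, by positivity, fun t ht => ?_⟩
  rcases ht.1.eq_or_lt with h0 | h0
  · rw [← h0, hx]; simp
  · have h2 := h1 (y := t) (by rw [Real.dist_eq, sub_zero, abs_of_pos h0]; linarith [ht.2])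
      ⟨h0.le, h0.ne'⟩
    rw [slope_def_field, hx, sub_zero, sub_zero, lt_div_iff₀ h0, div_lt_iff₀ h0] at h2
    exact ⟨h2.1.le, h2.2.le⟩

lemma mm_zero_line {φ : E3 → ℂ} (h : IsCharFn φ) (e : E3) (u₀ : ℝ) (hu₀ : 0 < u₀)
    (hz : ∀ u, 0 < u → u < u₀ → mm φ (u • e) = 0) : e ∈ degV φ h := by
  have hdouble : ∀ (k : ℕ) (y : E3), mm φ y = 0 → mm φ ((2 : ℝ) ^ k • y) = 0 := by
    intro k
    induction k with
    | zero => intro y hy; simpa using hy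
    | succ k ih =>
      intro y hy
      rw [show ((2 : ℝ) ^ (k + 1)) • y = (2 : ℝ) ^ k • y + (2 : ℝ) ^ k • y by rw [pow_succ]; module,
        h.mm_add_of (ih y hy), ih y hy]
  have hpos : ∀ a : ℝ, 0 < a → mm φ (a • e) = 0 := by
    intro a ha
    obtain ⟨k, hk⟩ := pow_unbounded_of_one_lt (a / u₀) (show (1 : ℝ) < 2 by norm_num)
    have h2 : (0 : ℝ) < 2 ^ k := by positivity
    have := hdouble k ((a / 2 ^ k) • e) (hz _ (by positivity) (by
      rw [div_lt_iff₀ hu₀] at hk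
      rw [div_lt_iff₀ h2]; linarith))
    rwa [smul_smul, mul_div_cancel₀ _ h2.ne'] at this
  intro a
  rcases lt_trichotomy a 0 with ha | ha | ha
  · have := hpos (-a) (by linarith)
    rwa [neg_smul, h.mm_neg] at this
  · rw [ha, zero_smul]; exact h.mm_zero
  · exact hpos a ha

lemma psi_cont {b : ℝ → ℝ} {ψ : ℝ → E3 → ℂ} {ψ₀ : E3 → ℂ} (hψ : IsBobylevSolution b ψ ψ₀)
    (t : ℝ) (ht : 0 ≤ t) : Continuous (ψ t) := by
  rw [← continuousOn_univ]
  exact hψ.cont.comp (f := fun x : E3 => (t, x)) (by fun_prop) (fun x _ => ⟨ht, mem_univ _⟩)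

lemma mm_cont {φ : E3 → ℂ} (h : Continuous φ) : Continuous (mm φ) := by
  unfold mm; fun_prop

lemma DD_pos {b : ℝ → ℝ} {s K : ℝ} (hs0 : 0 < s) (hK : 0 < K) (hb0 : ∀ x, 0 ≤ b x)
    (hsing : KernelSingular b s K)
    {ψ : ℝ → E3 → ℂ} {ψ₀ : E3 → ℂ} (hψ : IsBobylevSolution b ψ ψ₀)
    (hV : degV (ψ 0) (hψ.isCharFn 0 le_rfl) ≠ ⊤)
    (f : E3) (hf : ‖f‖ = 1) (hfV : f ∈ degV (ψ 0) (hψ.isCharFn 0 le_rfl)) :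
    0 < DD b (ψ 0) f := by
  have hch := hψ.isCharFn 0 le_rfl
  have hc := psi_cont hψ 0 le_rfl
  have hI := (deriv_mm hψ f (degV_mm hfV)).1
  have hnn : ∀ σ : sphere (0 : E3) 1, 0 ≤ b (⟪f, (σ : E3)⟫ / ‖f‖) * mm (ψ 0) (xiMinus f σ) :=
    fun σ => mul_nonneg (hb0 _) (hch.mm_nonneg _)
  have h0 : 0 ≤ ∫ σ, b (⟪f, (σ : E3)⟫ / ‖f‖) * mm (ψ 0) (xiMinus f σ) ∂sphμ :=
    integral_nonneg hnn
  by_contra hcon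
  have hz : ∫ σ, b (⟪f, (σ : E3)⟫ / ‖f‖) * mm (ψ 0) (xiMinus f σ) ∂sphμ = 0 := by
    unfold DD at hcon; linarith
  rw [integral_eq_zero_iff_of_nonneg hnn hI] at hz
  obtain ⟨θ₀, hθ₀, hker⟩ := kernel_lower hs0 hK hsing
  obtain ⟨θ₁, hθ₁, hθ₁a, hθ₁b⟩ : ∃ θ₁ > 0, θ₁ < θ₀ ∧ θ₁ ≤ 1 :=
    ⟨min (θ₀ / 2) 1, by positivity, (min_le_left _ _).trans_lt (by linarith), min_le_right _ _⟩
  have hpi := Real.pi_gt_three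
  set U : Set (sphere (0 : E3) 1) := {σ | Real.cos θ₁ < ⟪f, (σ : E3)⟫ ∧ ⟪f, (σ : E3)⟫ < 1} with hU
  have hic : Continuous fun σ : sphere (0 : E3) 1 => ⟪f, (σ : E3)⟫ := by fun_prop
  have hUo : IsOpen U := (isOpen_lt continuous_const hic).inter (isOpen_lt hic continuous_const)
  have hUb : ∀ σ ∈ U, 0 < b ⟪f, (σ : E3)⟫ := by
    rintro σ ⟨h1, h2⟩
    have h3 : 0 < Real.arccos ⟪f, (σ : E3)⟫ := Real.arccos_pos.2 h2
    have h4 : Real.arccos ⟪f, (σ : E3)⟫ ≤ θ₁ := by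
      rw [← Real.arccos_cos hθ₁.le (by linarith)]
      exact Real.arccos_le_arccos h1.le
    have h5 := hker _ _ h3 h4 hθ₁a
    rw [Real.cos_arccos (by linarith [Real.neg_one_le_cos θ₁]) h2.le] at h5
    exact lt_of_lt_of_le (by positivity) h5
  have hEq : EqOn (fun σ => mm (ψ 0) (xiMinus f σ)) (fun _ => 0) U := by
    have : sphμ.IsOpenPosMeasure := by unfold sphμ; infer_instance
    refine Measure.eqOn_open_of_ae_eq (μ := sphμ) ?_ hUo
      ((mm_cont hc).comp (xiMinus_cont f)).continuousOn continuousOn_const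
    rw [Filter.EventuallyEq, ae_restrict_iff' hUo.measurableSet]
    filter_upwards [hz] with σ hσ hσU
    simp only [Pi.zero_apply, hf, div_one] at hσ
    rcases mul_eq_zero.1 hσ with h | h
    · exact absurd h (hUb σ hσU).ne'
    · exact h
  apply hV
  have hperp : ∀ e : E3, ‖e‖ = 1 → ⟪f, e⟫ = 0 → e ∈ degV (ψ 0) hch := by
    intro e he hfe
    have hs1 : 0 < Real.sin θ₁ := Real.sin_pos_of_pos_of_lt_pi hθ₁ (by linarith)
    refine mm_zero_line hch e (1 / 2 * Real.sin θ₁) (by positivity) ?_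
    intro u hu hu'
    set θ := Real.arcsin (2 * u) with hθ
    have hs2 : Real.sin θ = 2 * u := Real.sin_arcsin (by linarith) (by
      linarith [Real.sin_le_one θ₁])
    have hθpos : 0 < θ := Real.arcsin_pos.2 (by linarith)
    have hθlt : θ < θ₁ := by
      by_contra hcon2
      push Not at hcon2
      have := Real.sin_le_sin_of_le_of_le_pi_div_two (by linarith) (Real.arcsin_le_pi_div_two _) hcon2
      rw [← hθ, hs2] at this
      linarith
    have hnorm : ‖Real.cos θ • f + Real.sin θ • e‖ = 1 := by
      have : ‖Real.cos θ • f + Real.sin θ • e‖ ^ 2 = 1 := by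
        rw [← real_inner_self_eq_norm_sq, inner_add_left, inner_add_right, inner_add_right]
        simp only [real_inner_smul_left, real_inner_smul_right, real_inner_self_eq_norm_sq,
          hfe, real_inner_comm f e, norm_smul, hf, he, Real.norm_eq_abs, mul_one, sq_abs]
        nlinarith [Real.sin_sq_add_cos_sq θ]
      nlinarith [norm_nonneg (Real.cos θ • f + Real.sin θ • e)]
    have hin : ⟪f, Real.cos θ • f + Real.sin θ • e⟫ = Real.cos θ := by
      rw [inner_add_right, real_inner_smul_right, real_inner_smul_right, hfe,
        real_inner_self_eq_norm_sq, hf]; ring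
    have hmem : (⟨_, by rw [mem_sphere_zero_iff_norm]; exact hnorm⟩ : sphere (0 : E3) 1) ∈ U := by
      simp only [hU, Set.mem_ofPred_eq, hin]
      refine ⟨Real.cos_lt_cos_of_nonneg_of_le_pi hθpos.le (by linarith) hθlt, ?_⟩
      rw [← Real.cos_zero]
      exact Real.cos_lt_cos_of_nonneg_of_le_pi le_rfl (by linarith) hθpos
    have h1 := hEq hmem
    simp only [xiMinus, hf] at h1
    have h2 : (1 / 2 : ℝ) • f - ((1 : ℝ) / 2) • (Real.cos θ • f + Real.sin θ • e)
        = (1 / 2 * (1 - Real.cos θ)) • f + -(u • e) := by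
      rw [hs2]; module
    rw [h2, hch.mm_add_of (hfV _), hch.mm_neg] at h1
    exact h1
  rw [eq_top_iff]
  intro y _
  have hy : y = ⟪f, y⟫ • f + (y - ⟪f, y⟫ • f) := by module
  rw [hy]
  refine Submodule.add_mem _ (Submodule.smul_mem _ _ hfV) ?_
  set z := y - ⟪f, y⟫ • f with hzdef
  have hfz : ⟪f, z⟫ = 0 := by
    rw [hzdef, inner_sub_right, real_inner_smul_right, real_inner_self_eq_norm_sq, hf]; ring
  by_cases hz0 : z = 0
  · rw [hz0]; exact Submodule.zero_mem _
  · have hzn : ‖z‖ ≠ 0 := norm_ne_zero_iff.2 hz0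
    have := hperp (‖z‖⁻¹ • z) (by rw [norm_smul, norm_inv, norm_norm, inv_mul_cancel₀ hzn])
      (by rw [real_inner_smul_right, hfz, mul_zero])
    have h2 := Submodule.smul_mem _ ‖z‖ this
    rwa [smul_smul, mul_inv_cancel₀ hzn, one_smul] at h2

lemma Q_tendsto {X : Type*} [MeasurableSpace X] (μ : Measure X) [SFinite μ]
    (w : X → ENNReal) (hw : Measurable w) (hwt : ∀ σ, w σ ≠ ⊤)
    (q : ℝ → X → ENNReal) (hq : Measurable (Function.uncurry q))
    (hq2 : ∀ u y σ, q u σ ≤ 2 * q y σ + 2 * q (y + u) σ)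
    (hq0 : ∀ σ, Tendsto (fun u => q u σ) (𝓝[≥] 0) (𝓝 0))
    (hfin : ∀ u ∈ Icc (0 : ℝ) 1, ∫⁻ σ, w σ * q u σ ∂μ < ⊤) :
    Tendsto (fun u => ∫⁻ σ, w σ * q u σ ∂μ) (𝓝[≥] 0) (𝓝 0) := by
  have hqu : ∀ u, Measurable (q u) := fun u => hq.comp (measurable_const.prodMk measurable_id)
  have hqs : ∀ σ, Measurable (fun u => q u σ) := fun σ => hq.comp (measurable_id.prodMk measurable_const)
  have hjoint : Measurable (Function.uncurry fun (u : ℝ) (σ : X) => w σ * q u σ) :=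
    (hw.comp measurable_snd).mul hq
  set Q : ℝ → ENNReal := fun u => ∫⁻ σ, w σ * q u σ ∂μ with hQ
  have hQm : Measurable Q := hjoint.lintegral_prod_right
  have hQ2 : ∀ u y, Q u ≤ 2 * Q y + 2 * Q (y + u) := by
    intro u y
    have hm : ∀ v, Measurable fun σ => w σ * q v σ := fun v => hw.mul (hqu v)
    simp only [hQ]
    rw [← lintegral_const_mul _ (hm _), ← lintegral_const_mul _ (hm _),
      ← lintegral_add_left ((hm _).const_mul _)]
    refine lintegral_mono fun σ => ?_
    calc w σ * q u σ ≤ w σ * (2 * q y σ + 2 * q (y + u) σ) := by gcongr; exact hq2 _ _ _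
      _ = _ := by ring
  obtain ⟨n, hn⟩ := steinhaus (fun n => {u | Q u ≤ (n : ENNReal)})
    (fun i j h u (hu : Q u ≤ (i : ENNReal)) => le_trans hu (Nat.cast_le.2 h))
    (fun n => measurableSet_le hQm measurable_const) 1 one_pos (by
      intro u hu
      obtain ⟨n, hn⟩ := ENNReal.exists_nat_gt (hfin u hu).ne
      exact mem_iUnion.2 ⟨n, hn.le⟩)
  have hQb : ∀ u ∈ Icc (0 : ℝ) (1 / 4), Q u ≤ 4 * n := by
    intro u hu
    obtain ⟨y, hy1, hy2⟩ := hn u hu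
    calc Q u ≤ 2 * Q y + 2 * Q (y + u) := hQ2 _ _
      _ ≤ 2 * n + 2 * n := by
        have h1 : Q y ≤ n := hy1
        have h2 : Q (y + u) ≤ n := hy2
        gcongr
      _ = _ := by ring
  set J : X → ENNReal := fun σ => ∫⁻ y in Icc (0 : ℝ) (1 / 4), q y σ with hJ
  have hqJ : ∀ u ∈ Icc (0 : ℝ) (1 / 8), ∀ σ, q u σ ≤ 32 * J σ := by
    intro u hu σ
    have h1 : ∫⁻ _ in Icc (0 : ℝ) (1 / 8), q u σ ≤
        ∫⁻ y in Icc (0 : ℝ) (1 / 8), (2 * q y σ + 2 * q (y + u) σ) :=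
      lintegral_mono fun y => hq2 _ _ _
    rw [setLIntegral_const, Real.volume_Icc, lintegral_add_left ((hqs σ).const_mul _),
      lintegral_const_mul _ (hqs σ),
      lintegral_const_mul' _ _ (by norm_num)] at h1
    have h2 : ∫⁻ y in Icc (0 : ℝ) (1 / 8), q y σ ≤ J σ :=
      lintegral_mono_set (Icc_subset_Icc le_rfl (by norm_num))
    have h3 : ∫⁻ y in Icc (0 : ℝ) (1 / 8), q (y + u) σ ≤ J σ := by
      have : J σ = ∫⁻ y, (Icc (0 : ℝ) (1 / 4)).indicator (fun y => q y σ) (y + u) := by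
        rw [lintegral_add_right_eq_self (fun y => (Icc (0 : ℝ) (1 / 4)).indicator (fun y => q y σ) y),
          lintegral_indicator measurableSet_Icc]
      rw [this, ← lintegral_indicator measurableSet_Icc]
      refine lintegral_mono fun y => ?_
      by_cases hy : y ∈ Icc (0 : ℝ) (1 / 8)
      · rw [indicator_of_mem hy, indicator_of_mem]
        exact ⟨by linarith [hy.1, hu.1], by linarith [hy.2, hu.2]⟩
      · rw [indicator_of_notMem hy]; exact zero_le
    have h8 : ENNReal.ofReal (1 / 8 - 0) * 8 = 1 := by
      rw [show (8 : ENNReal) = ENNReal.ofReal 8 by norm_num, ← ENNReal.ofReal_mul (by norm_num)]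
      norm_num
    calc q u σ = q u σ * ENNReal.ofReal (1 / 8 - 0) * 8 := by rw [mul_assoc, h8, mul_one]
      _ ≤ (2 * J σ + 2 * J σ) * 8 := by
        gcongr
        exact h1.trans (by gcongr)
      _ = _ := by ring
  have hJm : Measurable J := by
    have : Measurable (Function.uncurry fun (σ : X) (u : ℝ) => q u σ) := hq.comp measurable_swap
    exact this.lintegral_prod_right
  have hz : ∫⁻ _ : X, (0 : ENNReal) ∂μ = 0 := lintegral_zero
  rw [← hz]
  refine tendsto_lintegral_filter_of_dominated_convergence (fun σ => w σ * (32 * J σ))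
    (Eventually.of_forall fun u => hw.mul (hqu u)) ?_ ?_ ?_
  · have : Icc (0 : ℝ) (1 / 8) ∈ 𝓝[≥] (0 : ℝ) := Icc_mem_nhdsGE (by norm_num)
    filter_upwards [this] with u hu
    refine Eventually.of_forall fun σ => ?_
    gcongr
    exact hqJ u hu σ
  · have e : ∀ σ, w σ * (32 * J σ) = 32 * ∫⁻ y in Icc (0 : ℝ) (1 / 4), w σ * q y σ := by
      intro σ
      rw [lintegral_const_mul _ (hqs σ)]; ring
    simp_rw [e]
    rw [lintegral_const_mul' _ _ (by norm_num), lintegral_lintegral_swap]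
    · refine ENNReal.mul_ne_top (by norm_num) (ne_top_of_le_ne_top ?_
        (setLIntegral_mono (g := fun _ => 4 * (n : ENNReal)) measurable_const hQb))
      rw [setLIntegral_const, Real.volume_Icc]
      exact ENNReal.mul_ne_top (ENNReal.mul_ne_top (by norm_num) (ENNReal.natCast_ne_top n))
        ENNReal.ofReal_ne_top
    · exact (hjoint.comp measurable_swap).aemeasurable
  · refine Eventually.of_forall fun σ => ?_
    have := ENNReal.Tendsto.const_mul (hq0 σ) (Or.inr (hwt σ))
    simpa using this

lemma DD_small {b : ℝ → ℝ} (hb : Measurable b) (hb0 : ∀ x, 0 ≤ b x)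
    {ψ : ℝ → E3 → ℂ} {ψ₀ : E3 → ℂ} (hψ : IsBobylevSolution b ψ ψ₀)
    (f : E3) (hf : ‖f‖ = 1) (hfV : f ∈ degV (ψ 0) (hψ.isCharFn 0 le_rfl))
    (ε : ℝ) (hε : 0 < ε) : ∃ ρ > (0 : ℝ), ∀ u ∈ Icc (0 : ℝ) ρ, DD b (ψ 0) (u • f) < ε := by
  have hch := hψ.isCharFn 0 le_rfl
  have hc := psi_cont hψ 0 le_rfl
  have : IsFiniteMeasure sphμ := by unfold sphμ; infer_instance
  set w : sphere (0 : E3) 1 → ENNReal := fun σ => ENNReal.ofReal (b ⟪f, (σ : E3)⟫) with hw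
  set q : ℝ → sphere (0 : E3) 1 → ENNReal :=
    fun u σ => ENNReal.ofReal (mm (ψ 0) ((u / 2) • (σ : E3))) with hq
  have hpt : ∀ u > (0 : ℝ), ∀ σ : sphere (0 : E3) 1,
      b (⟪u • f, (σ : E3)⟫ / ‖u • f‖) * mm (ψ 0) (xiMinus (u • f) σ)
        = b ⟪f, (σ : E3)⟫ * mm (ψ 0) ((u / 2) • (σ : E3)) := by
    intro u hu σ
    have h1 : ‖u • f‖ = u := by rw [norm_smul, hf, mul_one, Real.norm_eq_abs, abs_of_pos hu]
    unfold xiMinus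
    rw [h1, real_inner_smul_left, mul_div_cancel_left₀ _ hu.ne', smul_smul, sub_eq_add_neg,
      hch.mm_add_of (hfV _), hch.mm_neg]
  have hzero : ∀ σ : sphere (0 : E3) 1, q 0 σ = 0 := by
    intro σ; simp [hq, hch.mm_zero]
  have hQ : ∀ u > (0 : ℝ), ENNReal.ofReal (DD b (ψ 0) (u • f)) = 2 * ∫⁻ σ, w σ * q u σ ∂sphμ := by
    intro u hu
    have hI := (deriv_mm hψ (u • f) (hfV u)).1
    unfold DD
    rw [ENNReal.ofReal_mul (by norm_num), ofReal_integral_eq_lintegral_ofReal hI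
      (Eventually.of_forall fun σ => mul_nonneg (hb0 _) (hch.mm_nonneg _))]
    congr 1
    · norm_num
    · refine lintegral_congr fun σ => ?_
      rw [hpt u hu σ, ENNReal.ofReal_mul (hb0 _)]
  have hcont : Continuous fun p : ℝ × sphere (0 : E3) 1 => mm (ψ 0) ((p.1 / 2) • (p.2 : E3)) :=
    (mm_cont hc).comp (by fun_prop)
  have hT := Q_tendsto sphμ w
    (hb.comp (show Continuous fun σ : sphere (0 : E3) 1 => ⟪f, (σ : E3)⟫ by fun_prop).measurable).ennreal_ofReal
    (fun σ => ENNReal.ofReal_ne_top) q hcont.measurable.ennreal_ofReal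
    (by
      intro u y σ
      simp only [hq]
      have h2 : ∀ r : ℝ, (2 : ENNReal) * ENNReal.ofReal r = ENNReal.ofReal (2 * r) := by
        intro r
        rw [ENNReal.ofReal_mul (by norm_num)]; norm_num
      rw [h2, h2, ← ENNReal.ofReal_add
          (mul_nonneg (by norm_num) (hch.mm_nonneg _)) (mul_nonneg (by norm_num) (hch.mm_nonneg _))]
      refine ENNReal.ofReal_le_ofReal ?_
      have := hch.mm_add (-((y / 2) • (σ : E3))) (((y + u) / 2) • (σ : E3))
      rw [hch.mm_neg] at this
      convert this using 2
      module)
    (by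
      intro σ
      have h1 : Continuous fun u : ℝ => q u σ :=
        ENNReal.continuous_ofReal.comp (hcont.comp (by fun_prop : Continuous fun u : ℝ => (u, σ)))
      have := (h1.tendsto 0).mono_left (nhdsWithin_le_nhds (s := Ici 0))
      rwa [hzero] at this)
    (by
      intro u hu
      rcases hu.1.eq_or_lt with h | h
      · rw [← h]; simp [hzero]
      · have := hQ u h
        by_contra hcon
        rw [not_lt, top_le_iff] at hcon
        rw [hcon, ENNReal.mul_top (by norm_num)] at this
        exact ENNReal.ofReal_ne_top this)
  have hev := hT.eventually (gt_mem_nhds (show (0 : ENNReal) < ENNReal.ofReal (ε / 2) by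
    rw [ENNReal.ofReal_pos]; linarith))
  rw [eventually_nhdsWithin_iff, Metric.eventually_nhds_iff] at hev
  obtain ⟨δ, hδ, hev⟩ := hev
  refine ⟨δ / 2, by positivity, fun u hu => ?_⟩
  rcases hu.1.eq_or_lt with h | h
  · rw [← h, zero_smul]
    have : DD b (ψ 0) 0 = 0 := by simp [DD, xiMinus, hch.mm_zero]
    rwa [this]
  · have h1 := hev (y := u) (by rw [Real.dist_eq, sub_zero, abs_of_pos h]; linarith [hu.2]) h.le
    have h2 : ENNReal.ofReal (DD b (ψ 0) (u • f)) < ENNReal.ofReal ε := by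
      rw [hQ u h]
      calc 2 * ∫⁻ σ, w σ * q u σ ∂sphμ < 2 * ENNReal.ofReal (ε / 2) :=
            ENNReal.mul_lt_mul_right (by norm_num) (by norm_num) h1
        _ = ENNReal.ofReal ε := by
          rw [show (2 : ENNReal) = ENNReal.ofReal 2 by norm_num, ← ENNReal.ofReal_mul (by norm_num)]
          congr 1; ring
    exact (ENNReal.ofReal_lt_ofReal_iff hε).1 h2

lemma line_equi {b : ℝ → ℝ} (hb : Measurable b) (hb0 : ∀ x, 0 ≤ b x)
    {ψ : ℝ → E3 → ℂ} {ψ₀ : E3 → ℂ} (hψ : IsBobylevSolution b ψ ψ₀)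
    (f : E3) (hf : ‖f‖ = 1) (hfV : f ∈ degV (ψ 0) (hψ.isCharFn 0 le_rfl))
    (ε : ℝ) (hε : 0 < ε) : ∃ ρ > (0 : ℝ), ∃ T > (0 : ℝ), ∀ u : ℝ, |u| ≤ ρ → ∀ t ∈ Icc 0 T,
      mm (ψ t) (u • f) ≤ ε * t := by
  have hch := hψ.isCharFn 0 le_rfl
  obtain ⟨ρ, hρ, hD⟩ := DD_small hb hb0 hψ f hf hfV (ε / 4) (by positivity)
  set B : ℕ → Set ℝ := fun n => {u | ∀ t ∈ Icc (0 : ℝ) (1 / ((n : ℝ) + 1)),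
    mm (ψ t) (u • f) ≤ ε / 4 * t} with hB
  have hmono : Monotone B := by
    intro i j hij u hu t ht
    refine hu t ⟨ht.1, ht.2.trans ?_⟩
    exact Nat.one_div_le_one_div hij
  have hclosed : ∀ n, IsClosed (B n) := by
    intro n
    have : B n = ⋂ t ∈ Icc (0 : ℝ) (1 / ((n : ℝ) + 1)), {u | mm (ψ t) (u • f) ≤ ε / 4 * t} := by
      ext u; simp [hB]
    rw [this]
    refine isClosed_biInter fun t ht => isClosed_le ?_ continuous_const
    exact (mm_cont (psi_cont hψ t ht.1)).comp (by fun_prop)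
  obtain ⟨n, hn⟩ := steinhaus B hmono (fun n => (hclosed n).measurableSet) ρ hρ (by
    intro u hu
    obtain ⟨T, hT, h⟩ := mm_le_of hψ (u • f) (hfV u) (DD b (ψ 0) (u • f) - 1) (ε / 4)
      (by linarith) (hD u hu)
    obtain ⟨n, hn⟩ := exists_nat_one_div_lt hT
    exact mem_iUnion.2 ⟨n, fun t ht => (h t ⟨ht.1, ht.2.trans hn.le⟩).2⟩)
  have hpos : ∀ u ∈ Icc (0 : ℝ) (ρ / 4), ∀ t ∈ Icc (0 : ℝ) (1 / ((n : ℝ) + 1)),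
      mm (ψ t) (u • f) ≤ ε * t := by
    intro u hu t ht
    obtain ⟨y, hy1, hy2⟩ := hn u hu
    have hct := hψ.isCharFn t ht.1
    have h1 := hct.mm_add (-(y • f)) ((y + u) • f)
    rw [hct.mm_neg, show -(y • f) + (y + u) • f = u • f by module] at h1
    linarith [hy1 t ht, hy2 t ht]
  refine ⟨ρ / 4, by positivity, 1 / ((n : ℝ) + 1), by positivity, fun u hu t ht => ?_⟩
  rcases le_total 0 u with h | h
  · rw [abs_of_nonneg h] at hu
    exact hpos u ⟨h, hu⟩ t ht
  · rw [abs_of_nonpos h] at hu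
    have := hpos (-u) ⟨by linarith, hu⟩ t ht
    rwa [neg_smul, (hψ.isCharFn t ht.1).mm_neg] at this

lemma mm_sum {φ : E3 → ℂ} (h : IsCharFn φ) {ι : Type*} (s : Finset ι) (y : ι → E3) :
    mm φ (∑ i ∈ s, y i) ≤ 2 ^ s.card * ∑ i ∈ s, mm φ (y i) := by
  classical
  induction s using Finset.induction_on with
  | empty => simp [h.mm_zero]
  | insert a s ha ih =>
    rw [Finset.sum_insert ha, Finset.sum_insert ha, Finset.card_insert_of_notMem ha, pow_succ]
    have h1 := h.mm_add (y a) (∑ i ∈ s, y i)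
    have h2 : (1 : ℝ) ≤ 2 ^ s.card := one_le_pow₀ (by norm_num)
    have h3 := h.mm_nonneg (y a)
    nlinarith

lemma V_equi {b : ℝ → ℝ} (hb : Measurable b) (hb0 : ∀ x, 0 ≤ b x)
    {ψ : ℝ → E3 → ℂ} {ψ₀ : E3 → ℂ} (hψ : IsBobylevSolution b ψ ψ₀)
    (ε : ℝ) (hε : 0 < ε) : ∃ ρ > (0 : ℝ), ∃ T > (0 : ℝ), ∀ x ∈ degV (ψ 0) (hψ.isCharFn 0 le_rfl),
      ‖x‖ ≤ ρ → ∀ t ∈ Icc 0 T, mm (ψ t) x ≤ ε * t := by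
  set V := degV (ψ 0) (hψ.isCharFn 0 le_rfl) with hV
  set B := stdOrthonormalBasis ℝ V
  set d := Module.finrank ℝ V
  set ε' := ε / (2 ^ d * (d + 1)) with hε'
  have hε'p : 0 < ε' := by positivity
  have hB : ∀ i, ‖(B i : E3)‖ = 1 := fun i => B.orthonormal.1 i
  have hl : ∀ i : Fin d, ∃ ρ > (0 : ℝ), ∃ T > (0 : ℝ), ∀ u : ℝ, |u| ≤ ρ → ∀ t ∈ Icc 0 T,
      mm (ψ t) (u • (B i : E3)) ≤ ε' * t := fun i =>
    line_equi hb hb0 hψ (B i) (hB i) (B i).2 ε' hε'p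
  choose ρ hρ T hT hl using hl
  have hex : ∀ g : Fin d → ℝ, (∀ i, 0 < g i) → ∃ r > 0, ∀ i, r ≤ g i := by
    intro g hg
    have : ∀ᶠ r in 𝓝[>] (0 : ℝ), ∀ i, r ≤ g i := by
      rw [eventually_all]
      intro i
      filter_upwards [Ioc_mem_nhdsGT (hg i)] with r hr using hr.2
    obtain ⟨r, hr, hr0⟩ := (this.and self_mem_nhdsWithin).exists
    exact ⟨r, hr0, hr⟩
  obtain ⟨ρ', hρ', hρ'l⟩ := hex ρ hρ
  obtain ⟨T', hT', hT'l⟩ := hex T hT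
  refine ⟨ρ', hρ', T', hT', fun x hx hxn t ht => ?_⟩
  have hsum : x = ∑ i, (B.repr ⟨x, hx⟩ i) • (B i : E3) := by
    have := congrArg (Subtype.val) (B.sum_repr ⟨x, hx⟩)
    rw [Submodule.coe_sum] at this
    exact this.symm
  have hcoef : ∀ i, |B.repr ⟨x, hx⟩ i| ≤ ρ' := by
    intro i
    have h1 := PiLp.norm_apply_le (B.repr ⟨x, hx⟩) i
    rw [B.repr.norm_map] at h1
    exact h1.trans hxn
  have h1 := mm_sum (hψ.isCharFn t ht.1) Finset.univ (fun i => (B.repr ⟨x, hx⟩ i) • (B i : E3))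
  rw [← hsum] at h1
  have h2 : ∑ i, mm (ψ t) ((B.repr ⟨x, hx⟩ i) • (B i : E3)) ≤ ∑ _i : Fin d, ε' * t :=
    Finset.sum_le_sum fun i _ => hl i _ ((hcoef i).trans (hρ'l i)) t ⟨ht.1, ht.2.trans (hT'l i)⟩
  rw [Finset.sum_const, Finset.card_univ, Fintype.card_fin, nsmul_eq_mul] at h2
  rw [Finset.card_univ, Fintype.card_fin] at h1
  have h4 : (2 : ℝ) ^ d * ((d + 1) * (ε' * t)) = ε * t := by
    rw [hε']; field_simp
  calc mm (ψ t) x ≤ 2 ^ d * (d * (ε' * t)) := h1.trans (by gcongr)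
    _ ≤ 2 ^ d * ((d + 1) * (ε' * t)) := by
      have : 0 ≤ ε' * t := mul_nonneg hε'p.le ht.1
      gcongr
      linarith
    _ = _ := h4

lemma exists_perp (P : Submodule ℝ E3) (hP : 2 ≤ Module.finrank ℝ P) (ξ : E3) :
    ∃ f ∈ P, ‖f‖ = 1 ∧ ⟪ξ, f⟫ = 0 := by
  have h1 : LinearMap.ker ((innerₛₗ ℝ ξ).domRestrict P) ≠ ⊥ := by
    apply LinearMap.ker_ne_bot_of_finrank_lt
    rw [Module.finrank_self]; omega
  obtain ⟨v, hv, hv0⟩ := Submodule.exists_mem_ne_zero_of_ne_bot h1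
  have hv1 : ⟪ξ, (v : E3)⟫ = 0 := by simpa using hv
  have hvn : ‖(v : E3)‖ ≠ 0 := by simpa using hv0
  refine ⟨‖(v : E3)‖⁻¹ • (v : E3), P.smul_mem _ v.2, ?_, ?_⟩
  · rw [norm_smul, norm_inv, norm_norm, inv_mul_cancel₀ hvn]
  · rw [real_inner_smul_right, hv1, mul_zero]

lemma local_V {b : ℝ → ℝ} {s K : ℝ} (hs0 : 0 < s) (hK : 0 < K) (hb : Measurable b)
    (hb0 : ∀ x, 0 ≤ b x) (hsing : KernelSingular b s K)
    {ψ : ℝ → E3 → ℂ} {ψ₀ : E3 → ℂ} (hψ : IsBobylevSolution b ψ ψ₀)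
    (hV : degV (ψ 0) (hψ.isCharFn 0 le_rfl) ≠ ⊤)
    (f : E3) (hf : ‖f‖ = 1) (hfV : f ∈ degV (ψ 0) (hψ.isCharFn 0 le_rfl)) :
    ∃ a > (0 : ℝ), ∃ δ > (0 : ℝ), ∃ T > (0 : ℝ), ∃ c > (0 : ℝ),
      ∀ x ∈ degV (ψ 0) (hψ.isCharFn 0 le_rfl), ‖x - a • f‖ < δ → ∀ t ∈ Icc 0 T,
        c * t ≤ mm (ψ t) x := by
  have hD := DD_pos hs0 hK hb0 hsing hψ hV f hf hfV
  set D := DD b (ψ 0) f with hDdef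
  obtain ⟨T₁, hT₁, h1⟩ := mm_le_of hψ f (degV_mm hfV) (D / 2) (D + 1) (by linarith) (by linarith)
  obtain ⟨ρ, hρ, T₂, hT₂, h2⟩ := V_equi hb hb0 hψ (D / 8) (by positivity)
  refine ⟨1, one_pos, ρ, hρ, min T₁ T₂, lt_min hT₁ hT₂, D / 8, by positivity, ?_⟩
  intro x hx hxf t ht
  rw [one_smul] at hxf
  have h3 := (h1 t ⟨ht.1, ht.2.trans (min_le_left _ _)⟩).1
  have h4 := h2 (x - f) (Submodule.sub_mem _ hx hfV) hxf.le t ⟨ht.1, ht.2.trans (min_le_right _ _)⟩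
  have hct := hψ.isCharFn t ht.1
  have h5 := hct.mm_add x (-(x - f))
  rw [hct.mm_neg, show x + -(x - f) = f by module] at h5
  linarith

lemma local_perp {b : ℝ → ℝ}
    {ψ : ℝ → E3 → ℂ} {ψ₀ : E3 → ℂ} (hψ : IsBobylevSolution b ψ ψ₀)
    (f : E3) (hfV : f ∉ degV (ψ 0) (hψ.isCharFn 0 le_rfl)) :
    ∃ a > (0 : ℝ), ∃ δ > (0 : ℝ), ∃ T > (0 : ℝ), ∃ c > (0 : ℝ),
      ∀ x, ‖x - a • f‖ < δ → ∀ t ∈ Icc 0 T, c * t ≤ mm (ψ t) x := by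
  have hch := hψ.isCharFn 0 le_rfl
  have h1 : ∃ a > (0 : ℝ), 0 < mm (ψ 0) (a • f) := by
    by_contra hcon
    push Not at hcon
    exact hfV (mm_zero_line hch f 1 one_pos fun u hu _ =>
      le_antisymm (hcon u hu) (hch.mm_nonneg _))
  obtain ⟨a, ha, hm⟩ := h1
  have hc : ContinuousWithinAt (fun p : ℝ × E3 => mm (ψ p.1) p.2) (Ici 0 ×ˢ univ) (0, a • f) := by
    have := hψ.cont (0, a • f) ⟨self_mem_Ici, mem_univ _⟩
    exact continuousWithinAt_const.sub (this.norm.pow 2)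
  set c := mm (ψ 0) (a • f) with hcdef
  have hev := hc.eventually (lt_mem_nhds (show c / 2 < mm (ψ 0) (a • f) by linarith))
  rw [eventually_nhdsWithin_iff, Metric.eventually_nhds_iff] at hev
  obtain ⟨δ, hδ, hev⟩ := hev
  refine ⟨a, ha, δ, hδ, min 1 (δ / 2), by positivity, c / 2, by positivity, ?_⟩
  intro x hx t ht
  have ht1 : t ≤ 1 := ht.2.trans (min_le_left _ _)
  have ht2 : t ≤ δ / 2 := ht.2.trans (min_le_right _ _)
  have := hev (y := (t, x)) (by
    rw [Prod.dist_eq, max_lt_iff]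
    refine ⟨?_, by rw [dist_eq_norm]; exact hx⟩
    rw [Real.dist_eq, sub_zero, abs_of_nonneg ht.1]; linarith) ⟨ht.1, mem_univ _⟩
  simp only at this
  nlinarith [ht.1]

lemma uniform_coercive {b : ℝ → ℝ} {s K : ℝ} (hs0 : 0 < s) (hK : 0 < K)
    (hb : Measurable b) (hb0 : ∀ x, 0 ≤ b x) (hsing : KernelSingular b s K)
    (ψ : ℝ → E3 → ℂ) (hψ : ∀ t ≥ 0, IsCharFn (ψ t)) (hψc : ∀ t ≥ 0, Continuous (ψ t))
    (P : Submodule ℝ E3)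
    (hloc : ∀ f ∈ P, ‖f‖ = 1 → ∃ a > (0 : ℝ), ∃ δ > (0 : ℝ), ∃ T > (0 : ℝ), ∃ c > (0 : ℝ),
      ∀ x ∈ P, ‖x - a • f‖ < δ → ∀ t ∈ Icc 0 T, c * t ≤ mm (ψ t) x) :
    ∃ T > (0 : ℝ), ∃ R ≥ (1 : ℝ), ∃ c > (0 : ℝ), ∀ f ∈ P, ‖f‖ = 1 → ∀ ξ : E3, ⟪ξ, f⟫ = 0 →
      R ≤ ‖ξ‖ → ∀ t ∈ Icc 0 T, ENNReal.ofReal (c * t * ‖ξ‖ ^ (2 * s)) ≤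
        ∫⁻ σ, ENNReal.ofReal (b (⟪ξ, (σ : E3)⟫ / ‖ξ‖) * (1 - ‖ψ t (xiMinus ξ σ)‖)) ∂sphμ := by
  set S : Set E3 := (P : Set E3) ∩ sphere 0 1 with hS
  have hcomp : IsCompact S := (isCompact_sphere 0 1).inter_left (Submodule.closed_of_finiteDimensional P)
  have key : ∃ T > (0 : ℝ), ∃ R ≥ (1 : ℝ), ∃ c > (0 : ℝ), ∀ f ∈ S, ∀ ξ : E3, ⟪ξ, f⟫ = 0 →
      R ≤ ‖ξ‖ → ∀ t ∈ Icc 0 T, ENNReal.ofReal (c * t * ‖ξ‖ ^ (2 * s)) ≤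
        ∫⁻ σ, ENNReal.ofReal (b (⟪ξ, (σ : E3)⟫ / ‖ξ‖) * (1 - ‖ψ t (xiMinus ξ σ)‖)) ∂sphμ := by
    refine hcomp.induction_on (p := fun S => ∃ T > (0 : ℝ), ∃ R ≥ (1 : ℝ), ∃ c > (0 : ℝ),
      ∀ f ∈ S, ∀ ξ : E3, ⟪ξ, f⟫ = 0 →
      R ≤ ‖ξ‖ → ∀ t ∈ Icc 0 T, ENNReal.ofReal (c * t * ‖ξ‖ ^ (2 * s)) ≤
        ∫⁻ σ, ENNReal.ofReal (b (⟪ξ, (σ : E3)⟫ / ‖ξ‖) * (1 - ‖ψ t (xiMinus ξ σ)‖)) ∂sphμ)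
      ?_ ?_ ?_ ?_
    · exact ⟨1, one_pos, 1, le_rfl, 1, one_pos, fun f hf => absurd hf (notMem_empty f)⟩
    · rintro A B hAB ⟨T, hT, R, hR, c, hc, h⟩
      exact ⟨T, hT, R, hR, c, hc, fun f hf => h f (hAB hf)⟩
    · rintro A B ⟨T, hT, R, hR, c, hc, h⟩ ⟨T', hT', R', hR', c', hc', h'⟩
      refine ⟨min T T', lt_min hT hT', max R R', hR.trans (le_max_left _ _), min c c',
        lt_min hc hc', ?_⟩
      rintro f (hf | hf) ξ hξ hRξ t ht
      · refine le_trans (ENNReal.ofReal_le_ofReal ?_) (h f hf ξ hξ ((le_max_left _ _).trans hRξ) t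
          ⟨ht.1, ht.2.trans (min_le_left _ _)⟩)
        have := ht.1
        gcongr
        exact min_le_left _ _
      · refine le_trans (ENNReal.ofReal_le_ofReal ?_) (h' f hf ξ hξ ((le_max_right _ _).trans hRξ) t
          ⟨ht.1, ht.2.trans (min_le_right _ _)⟩)
        have := ht.1
        gcongr
        exact min_le_right _ _
    · rintro f₀ ⟨hf₀P, hf₀⟩
      rw [mem_sphere_zero_iff_norm] at hf₀
      obtain ⟨a, ha, δ, hδ, T, hT, c, hc, hl⟩ := hloc f₀ hf₀P hf₀
      obtain ⟨η, hη, R, hR, c', hc', h⟩ := local_coercive hs0 hK hb hb0 hsing ψ hψ hψc P f₀ hf₀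
        a δ T c ha hδ hc hl
      refine ⟨S ∩ ball f₀ η, inter_mem_nhdsWithin _ (ball_mem_nhds _ hη), T, hT, R, hR, c', hc', ?_⟩
      rintro f ⟨⟨hfP, hf⟩, hfb⟩ ξ hξ hRξ t ht
      rw [mem_ball, dist_eq_norm] at hfb
      rw [mem_sphere_zero_iff_norm] at hf
      exact h f hfP hf hfb ξ hξ hRξ t ht
  obtain ⟨T, hT, R, hR, c, hc, h⟩ := key
  exact ⟨T, hT, R, hR, c, hc, fun f hfP hf => h f ⟨hfP, by rwa [mem_sphere_zero_iff_norm]⟩⟩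

lemma pointwise_final {s : ℝ} (hs0 : 0 < s) (hs1 : s < 1) (T R c t : ℝ) (hR : 1 ≤ R) (hc : 0 < c)
    (ht : t ∈ Icc 0 T) (ξ : E3) (I : ENNReal)
    (h : R ≤ ‖ξ‖ → ENNReal.ofReal (c * t * ‖ξ‖ ^ (2 * s)) ≤ I) :
    ENNReal.ofReal (t * (1 + ‖ξ‖ ^ 2) ^ s) ≤
      ENNReal.ofReal (2 / c + T * (1 + R ^ 2) ^ s) * (I + 1) := by
  have ht0 := ht.1
  have hT0 : 0 ≤ T := ht0.trans ht.2
  have hA : 0 ≤ 2 / c := by positivity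
  have hB : 0 ≤ T * (1 + R ^ 2) ^ s := by positivity
  rcases le_or_gt R ‖ξ‖ with hξ | hξ
  · have h1 : (1 + ‖ξ‖ ^ 2) ^ s ≤ 2 * ‖ξ‖ ^ (2 * s) := by
      have hn : 1 ≤ ‖ξ‖ := hR.trans hξ
      calc (1 + ‖ξ‖ ^ 2) ^ s ≤ (2 * ‖ξ‖ ^ 2) ^ s := by
            apply Real.rpow_le_rpow (by positivity) (by nlinarith) hs0.le
        _ = 2 ^ s * (‖ξ‖ ^ 2) ^ s := Real.mul_rpow (by norm_num) (by positivity)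
        _ ≤ 2 * (‖ξ‖ ^ 2) ^ s := by
          gcongr
          calc (2 : ℝ) ^ s ≤ 2 ^ (1 : ℝ) := Real.rpow_le_rpow_of_exponent_le (by norm_num) hs1.le
            _ = 2 := Real.rpow_one 2
        _ = 2 * ‖ξ‖ ^ (2 * s) := by
          rw [Real.rpow_mul (norm_nonneg _)]; norm_num
    calc ENNReal.ofReal (t * (1 + ‖ξ‖ ^ 2) ^ s)
        ≤ ENNReal.ofReal (2 / c * (c * t * ‖ξ‖ ^ (2 * s))) := by
          apply ENNReal.ofReal_le_ofReal
          have : 2 / c * (c * t * ‖ξ‖ ^ (2 * s)) = t * (2 * ‖ξ‖ ^ (2 * s)) := by field_simp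
          rw [this]; gcongr
      _ = ENNReal.ofReal (2 / c) * ENNReal.ofReal (c * t * ‖ξ‖ ^ (2 * s)) :=
          ENNReal.ofReal_mul hA
      _ ≤ _ := by
          gcongr
          · linarith
          · exact (h hξ).trans le_self_add
  · calc ENNReal.ofReal (t * (1 + ‖ξ‖ ^ 2) ^ s)
        ≤ ENNReal.ofReal (2 / c + T * (1 + R ^ 2) ^ s) := by
          apply ENNReal.ofReal_le_ofReal
          have : t * (1 + ‖ξ‖ ^ 2) ^ s ≤ T * (1 + R ^ 2) ^ s := by
            have := ht.2
            gcongr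
          linarith
      _ = ENNReal.ofReal (2 / c + T * (1 + R ^ 2) ^ s) * 1 := (mul_one _).symm
      _ ≤ _ := by gcongr; exact le_add_self

/-- time-degenerate coercivity estimate. -/
theorem time_degenerate_coercivity
    (s K : ℝ) (hs0 : 0 < s) (hs1 : s < 1) (hK : 0 < K)
    (b : ℝ → ℝ) (hb_meas : Measurable b) (hb_nonneg : ∀ x, 0 ≤ b x)
    (hb_sing : KernelSingular b s K)
    (α : ℝ) (hα : 2 * s < α) (hα2 : α ≤ 2)
    (F₀ : Measure E3) [IsProbabilityMeasure F₀]
    (hnotdirac : ∀ v₀ : E3, F₀ {v₀} ≠ 1)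
    (ψ₀ : E3 → ℂ) (hψ₀ : ψ₀ = charFn F₀) (hψ₀K : KBdd α ψ₀)
    (ψ : ℝ → E3 → ℂ) (hψ : IsBobylevSolution b ψ ψ₀) :
    ∃ T > (0:ℝ), ∃ C > (0:ℝ), ∀ t ∈ Set.Icc (0:ℝ) T, ∀ h : E3 → ℂ, Measurable h →
      (∫⁻ ξ : E3, ENNReal.ofReal ((1 + ‖ξ‖ ^ 2) ^ s * ‖h ξ‖ ^ 2)) < ⊤ →
      ENNReal.ofReal t * (∫⁻ ξ : E3, ENNReal.ofReal ((1 + ‖ξ‖ ^ 2) ^ s * ‖h ξ‖ ^ 2)) ≤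
        ENNReal.ofReal C *
          ((∫⁻ ξ : E3,
              (∫⁻ σ, ENNReal.ofReal
                  (b (⟪ξ, (σ : E3)⟫ / ‖ξ‖) * (1 - ‖ψ t (xiMinus ξ σ)‖)) ∂sphμ)
                * ENNReal.ofReal (‖h ξ‖ ^ 2))
            + ∫⁻ ξ : E3, ENNReal.ofReal (‖h ξ‖ ^ 2)) := by
  set V := degV (ψ 0) (hψ.isCharFn 0 le_rfl) with hVdef
  have hV : V ≠ ⊤ := by
    intro htop
    obtain ⟨v₀, hv₀⟩ := dirac_of_mm_zero F₀ (by
      intro x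
      rw [← hψ₀, ← hψ.init]
      have : x ∈ V := by rw [htop]; trivial
      exact degV_mm this)
    exact hnotdirac v₀ hv₀
  have hP : ∃ P : Submodule ℝ E3, 2 ≤ Module.finrank ℝ P ∧ ∀ f ∈ P, ‖f‖ = 1 →
      ∃ a > (0 : ℝ), ∃ δ > (0 : ℝ), ∃ T > (0 : ℝ), ∃ c > (0 : ℝ),
      ∀ x ∈ P, ‖x - a • f‖ < δ → ∀ t ∈ Icc 0 T, c * t ≤ mm (ψ t) x := by
    by_cases h2 : 2 ≤ Module.finrank ℝ V
    · exact ⟨V, h2, fun f hf hfn =>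
        local_V hs0 hK hb_meas hb_nonneg hb_sing hψ hV f hfn hf⟩
    · refine ⟨Vᗮ, ?_, ?_⟩
      · have := Submodule.finrank_add_finrank_orthogonal V
        rw [finrank_euclideanSpace_fin] at this
        omega
      · intro f hf hfn
        have hfV : f ∉ V := by
          intro hfV
          have := Submodule.inner_right_of_mem_orthogonal hfV hf
          rw [real_inner_self_eq_norm_sq, hfn] at this
          norm_num at this
        obtain ⟨a, ha, δ, hδ, T, hT, c, hc, h⟩ := local_perp hψ f hfV
        exact ⟨a, ha, δ, hδ, T, hT, c, hc, fun x _ => h x⟩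
  obtain ⟨P, hP2, hloc⟩ := hP
  obtain ⟨T, hT, R, hR, c, hc, hco⟩ := uniform_coercive hs0 hK hb_meas hb_nonneg hb_sing ψ
    hψ.isCharFn (psi_cont hψ) P hloc
  refine ⟨T, hT, 2 / c + T * (1 + R ^ 2) ^ s, by positivity, ?_⟩
  intro t ht h hh _
  have hm : Measurable fun ξ : E3 => ENNReal.ofReal (‖h ξ‖ ^ 2) :=
    (hh.norm.pow_const 2).ennreal_ofReal
  rw [← lintegral_const_mul' _ _ ENNReal.ofReal_ne_top, ← lintegral_add_right _ hm,
    ← lintegral_const_mul' _ _ ENNReal.ofReal_ne_top]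
  refine lintegral_mono fun ξ => ?_
  obtain ⟨f, hfP, hf, hfξ⟩ := exists_perp P hP2 ξ
  have h1 := pointwise_final hs0 hs1 T R c t hR hc ht ξ _ (fun hRξ => hco f hfP hf ξ hfξ hRξ t ht)
  calc ENNReal.ofReal t * ENNReal.ofReal ((1 + ‖ξ‖ ^ 2) ^ s * ‖h ξ‖ ^ 2)
      = ENNReal.ofReal (t * (1 + ‖ξ‖ ^ 2) ^ s) * ENNReal.ofReal (‖h ξ‖ ^ 2) := by
        have ht0 := ht.1
        rw [← ENNReal.ofReal_mul ht.1, ← mul_assoc, ENNReal.ofReal_mul (by positivity)]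
    _ ≤ _ := mul_le_mul_left h1 _
    _ = _ := by ring
end
end

section
/- (Non-degenerate coercivity when the initial measure is not concentrated on a straight line.) Let 0 < s < 1 and let the collision kernel b satisfy b(cos θ)·θ^{2+2s} → K as θ → 0+ for some K > 0. Let α ∈ (2s, 2], let F₀ be a Borel probability measure on ℝ³ for which there is NO straight line L = {v₀ + τ w : τ ∈ ℝ} (v₀ ∈ ℝ³, w a unit vector) with F₀(L) = 1, let ψ₀ ∈ 𝒦^α be its characteristic function, and let ψ be a solution of the Fourier-transformed (Bobylev) homogeneous Boltzmann Cauchy problem with initial datum ψ₀. Then there exist T > 0 and C > 0 such that for every t ∈ [0, T] and every measurable h : ℝ³ → ℂ with ∫ (1+|ξ|²)^s |h(ξ)|² dξ < ∞: ∫_{ℝ³} (1+|ξ|²)^s |h(ξ)|² dξ ≤ C ( ∫_{ℝ³} ( ∫_{S²} b(ξ·σ/|ξ|)(1 − |ψ(t,ξ⁻)|) dσ ) |h(ξ)|² dξ + ∫_{ℝ³} |h(ξ)|² dξ ), where ξ⁻ = (ξ − |ξ|σ)/2. -/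
noncomputable section

open MeasureTheory Real Filter Metric Set
open scoped RealInnerProductSpace Topology

/-- If the char. function has modulus at least one, the exponential is a.e. constant. -/
lemma aux_ae_const (F : Measure E3) [IsProbabilityMeasure F] (η : E3)
    (h : 1 ≤ ‖charFn F η‖) :
    ∃ c : ℂ, ∀ᵐ v ∂F, Complex.exp (-(Complex.I * (⟪v, η⟫ : ℂ))) = c := by
  have hle : ∀ᵐ v ∂F, ‖Complex.exp (-(Complex.I * (⟪v, η⟫ : ℂ)))‖ ≤ 1 := by
    refine Eventually.of_forall fun v => ?_
    rw [Complex.norm_exp]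
    simp
  rcases ae_eq_const_or_norm_integral_lt_of_norm_le_const hle with h1 | h1
  · exact ⟨_, h1⟩
  · exfalso
    unfold charFn at h
    simp at h1
    linarith

lemma aux_exp_eq (x y : ℝ)
    (h : ∀ n : ℕ, Complex.exp (-(Complex.I * ((1 / ((n:ℝ) + 1) * x : ℝ) : ℂ)))
      = Complex.exp (-(Complex.I * ((1 / ((n:ℝ) + 1) * y : ℝ) : ℂ)))) : x = y := by
  obtain ⟨n, hn⟩ := exists_nat_gt |x - y|
  obtain ⟨k, hk⟩ := Complex.exp_eq_exp_iff_exists_int.1 (h n)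
  have h1 : (1 / ((n:ℝ) + 1) * y) = (1 / ((n:ℝ) + 1) * x) + k * (2 * π) := by
    generalize 1 / ((n:ℝ) + 1) * x = X at hk ⊢
    generalize 1 / ((n:ℝ) + 1) * y = Y at hk ⊢
    have := congrArg Complex.im hk
    simp at this
    linarith
  have hn0 : (0:ℝ) < (n:ℝ) + 1 := by positivity
  have h2 : y - x = k * (2 * π) * ((n:ℝ) + 1) := by
    field_simp at h1
    linarith
  by_cases hk0 : k = 0
  · subst hk0
    simp at h2
    linarith
  · exfalso
    have h3 : (1:ℝ) ≤ |(k:ℝ)| := by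
      have := Int.one_le_abs hk0
      exact_mod_cast this
    have h4 : |x - y| = |(k:ℝ)| * (2 * π) * ((n:ℝ) + 1) := by
      rw [abs_sub_comm, h2, abs_mul, abs_mul, abs_of_pos hn0, abs_of_pos Real.two_pi_pos]
    have h5 : (1:ℝ) ≤ 2 * π := by linarith [Real.pi_gt_three]
    have h6 : (1:ℝ) ≤ |(k:ℝ)| * (2 * π) := by nlinarith
    nlinarith

lemma aux_basis (p : E3) (hp : ‖p‖ = 1) :
    ∃ B : OrthonormalBasis (Fin 3) ℝ E3, B 0 = p := by
  have h : Orthonormal ℝ (({0} : Set (Fin 3)).domRestrict (fun _ : Fin 3 => p)) := by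
    constructor
    · intro i; exact hp
    · intro i j hij
      exact absurd (Subsingleton.elim i j) hij
  obtain ⟨B, hB⟩ := h.exists_orthonormalBasis_extension_of_card_eq (by simp)
  exact ⟨B, hB 0 rfl⟩

/-- Non-degeneracy in each direction. -/
lemma aux_nondeg (F₀ : Measure E3) [IsProbabilityMeasure F₀]
    (hnoline : ∀ (v₀ w : E3), ‖w‖ = 1 → F₀ {v : E3 | ∃ τ : ℝ, v = v₀ + τ • w} ≠ 1)
    (ω : E3) (hω : ‖ω‖ = 1) :
    ∃ η : E3, ⟪ω, η⟫ = 0 ∧ ‖charFn F₀ η‖ < 1 := by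
  by_contra! hcon
  obtain ⟨B, hB⟩ := aux_basis ω hω
  have key : ∀ i : Fin 3, i ≠ 0 → ∀ n : ℕ, ∃ c : ℂ, ∀ᵐ v ∂F₀,
      Complex.exp (-(Complex.I * ((1 / ((n:ℝ) + 1) * ⟪v, B i⟫ : ℝ) : ℂ))) = c := by
    intro i hi n
    have h0 : ⟪ω, (1 / ((n:ℝ) + 1)) • B i⟫ = 0 := by
      rw [← hB, inner_smul_right, B.inner_eq_zero hi.symm, mul_zero]
    obtain ⟨c, hc⟩ := aux_ae_const F₀ _ (hcon _ h0)
    refine ⟨c, ?_⟩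
    filter_upwards [hc] with v hv
    rwa [inner_smul_right] at hv
  choose! c hc using key
  have hall : ∀ᵐ v ∂F₀, ∀ i : Fin 3, i ≠ 0 → ∀ n : ℕ, 
      Complex.exp (-(Complex.I * ((1 / ((n:ℝ) + 1) * ⟪v, B i⟫ : ℝ) : ℂ))) = c i n := by
    rw [ae_all_iff]; intro i
    by_cases hi : i = 0
    · simp [hi]
    · have : ∀ᵐ v ∂F₀, ∀ n : ℕ, 
          Complex.exp (-(Complex.I * ((1 / ((n:ℝ) + 1) * ⟪v, B i⟫ : ℝ) : ℂ))) = c i n := by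
        rw [ae_all_iff]; intro n; exact hc i hi n
      filter_upwards [this] with v hv _ using hv
  obtain ⟨v₀, hv₀⟩ := hall.exists
  apply hnoline v₀ ω hω
  rw [← prob_compl_eq_zero_iff₀, ← mem_ae_iff]
  · filter_upwards [hall] with v hv
    refine ⟨⟪ω, v - v₀⟫, ?_⟩
    have h1 : ∀ i : Fin 3, i ≠ 0 → ⟪v, B i⟫ = ⟪v₀, B i⟫ := fun i hi =>
      aux_exp_eq _ _ fun n => (hv i hi n).trans (hv₀ i hi n).symm
    have h2 := B.sum_repr' (v - v₀)
    rw [Fin.sum_univ_three] at h2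
    have e1 : ⟪B 1, v - v₀⟫ = 0 := by
      rw [inner_sub_right, real_inner_comm, h1 1 (by decide), real_inner_comm, sub_self]
    have e2 : ⟪B 2, v - v₀⟫ = 0 := by
      rw [inner_sub_right, real_inner_comm, h1 2 (by decide), real_inner_comm, sub_self]
    rw [e1, e2, hB] at h2
    simp only [zero_smul, add_zero] at h2
    rw [h2]; abel
  · have hcl : IsClosed {v : E3 | ∃ τ : ℝ, v = v₀ + τ • ω} := by
      have : {v : E3 | ∃ τ : ℝ, v = v₀ + τ • ω} = {v : E3 | v = v₀ + ⟪ω, v - v₀⟫ • ω} := by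
        ext v
        constructor
        · rintro ⟨τ, rfl⟩
          simp [inner_smul_right, hω]
        · intro h; exact ⟨_, h⟩
      rw [this]
      exact isClosed_eq (by fun_prop) (by fun_prop)
    exact hcl.measurableSet.nullMeasurableSet

open scoped Pointwise in
/-- Lower bound for the surface measure of a spherical cap. -/
lemma aux_cap (p : E3) (hp : ‖p‖ = 1) (r : ℝ) (hr : 0 < r) (hr1 : r ≤ 1) :
    ENNReal.ofReal (r ^ 2 / 64) ≤ sphμ {σ : sphere (0 : E3) 1 | ‖(σ : E3) - p‖ < r} := by
  obtain ⟨B, hB⟩ := aux_basis p hp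
  have hms : MeasurableSet {σ : sphere (0 : E3) 1 | ‖(σ : E3) - p‖ < r} := by
    apply IsOpen.measurableSet
    exact isOpen_lt (by fun_prop) continuous_const
  let lo : Fin 3 → ℝ := ![1/2, -(r/8), -(r/8)]
  let hi : Fin 3 → ℝ := ![3/4, r/8, r/8]
  let S : Set (Fin 3 → ℝ) := Set.pi univ fun i => Ioo (lo i) (hi i)
  let Q : Set E3 := (fun x : E3 => (WithLp.ofLp (B.repr x) : Fin 3 → ℝ)) ⁻¹' S
  have hmp : MeasurePreserving (fun x : E3 => (WithLp.ofLp (B.repr x) : Fin 3 → ℝ))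
      volume volume :=
    (PiLp.volume_preserving_ofLp (Fin 3)).comp B.measurePreserving_repr
  have hSm : MeasurableSet S := MeasurableSet.univ_pi fun i => measurableSet_Ioo
  have hvol : volume Q = ENNReal.ofReal (r ^ 2 / 64) := by
    rw [hmp.measure_preimage hSm.nullMeasurableSet, volume_pi_Ioo, Fin.prod_univ_three,
      ← ENNReal.ofReal_mul, ← ENNReal.ofReal_mul]
    · congr 1
      simp [lo, hi]
      ring
    · simp [lo, hi]
      rw [← sub_nonneg]; ring_nf; positivity
    · simp [lo, hi]; norm_num
  have hsub : Q ⊆ Ioo (0:ℝ) 1 • (Subtype.val '' {σ : sphere (0 : E3) 1 | ‖(σ : E3) - p‖ < r}) := by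
    intro x hx
    have hx' : ∀ i, B.repr x i ∈ Ioo (lo i) (hi i) := fun i => hx i (mem_univ i)
    have h0 := hx' 0
    have h1 := hx' 1
    have h2 := hx' 2
    simp [lo, hi] at h0 h1 h2
    set a := B.repr x 0 with ha
    set y1 := B.repr x 1 with hy1
    set y2 := B.repr x 2 with hy2
    have hsum := B.sum_repr x
    rw [Fin.sum_univ_three, hB, ← ha, ← hy1, ← hy2] at hsum
    have hd : ‖x - a • p‖ < r / 4 := by
      have : x - a • p = y1 • B 1 + y2 • B 2 := by rw [← hsum]; abel
      rw [this]
      calc ‖y1 • B 1 + y2 • B 2‖ ≤ ‖y1 • B 1‖ + ‖y2 • B 2‖ := norm_add_le _ _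
        _ = |y1| + |y2| := by simp [norm_smul]
        _ < r / 4 := by
          have := abs_lt.2 h1
          have := abs_lt.2 h2
          linarith
    have hap : ‖a • p‖ = a := by rw [norm_smul, hp, Real.norm_of_nonneg (by linarith), mul_one]
    have hxa : |‖x‖ - a| < r / 4 := by
      have := abs_norm_sub_norm_le x (a • p)
      rw [hap] at this
      linarith
    have hxa' := abs_lt.1 hxa
    have hx0 : 0 < ‖x‖ := by linarith [h0.1, hxa'.1]
    have hx1 : ‖x‖ < 1 := by linarith [h0.2, hxa'.2]
    refine Set.mem_smul.2 ⟨‖x‖, ⟨hx0, hx1⟩, ‖x‖⁻¹ • x, ⟨⟨‖x‖⁻¹ • x, ?_⟩, ?_, rfl⟩, ?_⟩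
    · simp [norm_smul, hx0.ne']
    · show ‖‖x‖⁻¹ • x - p‖ < r
      have e : a • (‖x‖⁻¹ • x - p) = (a - ‖x‖) • (‖x‖⁻¹ • x) + (x - a • p) := by
        rw [sub_smul, smul_inv_smul₀ hx0.ne', smul_sub]; abel
      have h3 : a * ‖‖x‖⁻¹ • x - p‖ < r / 2 := by
        have : a * ‖‖x‖⁻¹ • x - p‖ = ‖a • (‖x‖⁻¹ • x - p)‖ := by
          rw [norm_smul, Real.norm_of_nonneg (by linarith)]
        rw [this, e]
        calc _ ≤ ‖(a - ‖x‖) • (‖x‖⁻¹ • x)‖ + ‖x - a • p‖ := norm_add_le _ _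
          _ = |‖x‖ - a| + ‖x - a • p‖ := by
            rw [norm_smul, norm_smul, norm_inv, norm_norm, inv_mul_cancel₀ hx0.ne', mul_one,
              Real.norm_eq_abs, abs_sub_comm]
          _ < r / 2 := by linarith
      have h4 := norm_nonneg (‖x‖⁻¹ • x - p)
      nlinarith [h0.1]
    · exact smul_inv_smul₀ hx0.ne' x
  unfold sphμ
  rw [Measure.toSphere_apply' _ hms, ← hvol]
  calc volume Q ≤ volume _ := measure_mono hsub
    _ ≤ _ := by
      apply le_mul_of_one_le_left (zero_le)
      simp

lemma aux_kernel (s K : ℝ) (hs0 : 0 < s) (b : ℝ → ℝ) (θ₀ : ℝ)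
    (hθ : ∀ θ ∈ Ioo (0:ℝ) θ₀, K / 2 < b (Real.cos θ) * θ ^ (2 + 2*s)) (hK : 0 < K)
    (ω σ : E3) (hω : ‖ω‖ = 1) (hσ : ‖σ‖ = 1) (hne : ω ≠ σ) (m : ℝ)
    (hm : π / 2 * ‖ω - σ‖ ≤ m) (hm0 : m < θ₀) :
    K / 2 * m ^ (-(2 + 2*s)) ≤ b ⟪ω, σ⟫ := by
  set θ := Real.arccos ⟪ω, σ⟫ with hθdef
  have habs : |⟪ω, σ⟫| ≤ 1 := by
    have := abs_real_inner_le_norm ω σ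
    rwa [hω, hσ, one_mul] at this
  have hcos : Real.cos θ = ⟪ω, σ⟫ := Real.cos_arccos (abs_le.1 habs).1 (abs_le.1 habs).2
  have hnpos : 0 < ‖ω - σ‖ := norm_pos_iff.2 (sub_ne_zero.2 hne)
  have hn2 : ‖ω - σ‖ ^ 2 = 2 - 2 * Real.cos θ := by
    rw [norm_sub_sq_real, hω, hσ, hcos]; ring
  have hpos : 0 < θ := by
    rw [hθdef, Real.arccos_pos, ← hcos]
    nlinarith
  have hπ : θ ≤ π := Real.arccos_le_pi _
  have hsin : 2 / π * (θ / 2) ≤ Real.sin (θ / 2) :=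
    Real.mul_le_sin (by linarith) (by linarith)
  have hns : ‖ω - σ‖ ^ 2 = (2 * Real.sin (θ / 2)) ^ 2 := by
    rw [hn2]
    have h1 : Real.cos θ = 1 - 2 * Real.sin (θ / 2) ^ 2 := by
      have := Real.cos_two_mul (θ / 2)
      rw [show 2 * (θ / 2) = θ by ring] at this
      have h2 := Real.sin_sq_add_cos_sq (θ / 2)
      linarith
    rw [h1]; ring
  have hs' : 0 ≤ Real.sin (θ / 2) := le_trans (by positivity) hsin
  have hne2 : ‖ω - σ‖ = 2 * Real.sin (θ / 2) :=
    (pow_left_inj₀ hnpos.le (by positivity) two_ne_zero).1 hns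
  have hθm : θ ≤ m := by
    refine le_trans ?_ hm
    rw [hne2]
    have : θ = π * (2 / π * (θ / 2)) := by field_simp
    nlinarith [Real.pi_pos]
  have hb := hθ θ ⟨hpos, lt_of_le_of_lt hθm hm0⟩
  rw [hcos] at hb
  have hm' : 0 < m := lt_of_lt_of_le hpos hθm
  have h1 : m ^ (-(2 + 2*s)) ≤ θ ^ (-(2 + 2*s)) :=
    Real.rpow_le_rpow_of_nonpos hpos hθm (by linarith)
  have h2 : θ ^ (2 + 2*s) * θ ^ (-(2 + 2*s)) = 1 := by
    rw [← Real.rpow_add hpos]; simp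
  have h3 : 0 < θ ^ (-(2 + 2*s)) := Real.rpow_pos_of_pos hpos _
  calc K / 2 * m ^ (-(2 + 2*s)) ≤ K / 2 * θ ^ (-(2 + 2*s)) := by gcongr
    _ ≤ (b ⟪ω, σ⟫ * θ ^ (2 + 2*s)) * θ ^ (-(2 + 2*s)) := by gcongr
    _ = b ⟪ω, σ⟫ := by rw [mul_assoc, h2, mul_one]

/-- The angular integral. -/
def aux_J (b : ℝ → ℝ) (ψ : ℝ → E3 → ℂ) (t : ℝ) (ξ : E3) : ENNReal :=
  ∫⁻ σ, ENNReal.ofReal (b (⟪ξ, (σ : E3)⟫ / ‖ξ‖) * (1 - ‖ψ t (xiMinus ξ σ)‖)) ∂sphμ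

lemma aux_point (ω η : E3) (N δ : ℝ) (hω : ‖ω‖ = 1) (hN : 0 < N) (hδ : 0 < δ)
    (hin : |⟪ω, η⟫| ≤ δ / 8) (hη : 8 * ‖η‖ ^ 2 ≤ δ * N) (hNδ : δ < N) :
    ∃ p : E3, ‖p‖ = 1 ∧ ‖p - (ω - (2 / N) • η)‖ ≤ δ / N := by
  set u := ω - (2 / N) • η with hu
  have hsq : ‖u‖ ^ 2 = 1 - 4 / N * ⟪ω, η⟫ + 4 / N ^ 2 * ‖η‖ ^ 2 := by
    rw [hu, norm_sub_sq_real, hω, inner_smul_right, norm_smul, Real.norm_of_nonneg (by positivity)]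
    ring
  have hη' : 4 / N ^ 2 * ‖η‖ ^ 2 ≤ δ / N / 2 := by
    rw [div_mul_eq_mul_div, div_div, div_le_div_iff₀ (by positivity) (by positivity)]
    nlinarith
  have hin' : |4 / N * ⟪ω, η⟫| ≤ δ / N / 2 := by
    rw [abs_mul, abs_of_pos (by positivity : 0 < 4 / N)]
    calc 4 / N * |⟪ω, η⟫| ≤ 4 / N * (δ / 8) := by gcongr
      _ = δ / N / 2 := by ring
  have h0 : 0 ≤ 4 / N ^ 2 * ‖η‖ ^ 2 := by positivity
  have hnn := norm_nonneg u
  have habs : |‖u‖ - 1| ≤ δ / N := by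
    have h1 : |‖u‖ ^ 2 - 1| ≤ δ / N := by
      rw [hsq, abs_le]
      have := abs_le.1 hin'
      constructor <;> linarith [this.1, this.2]
    have h2 : |‖u‖ ^ 2 - 1| = |‖u‖ - 1| * (‖u‖ + 1) := by
      rw [show ‖u‖ ^ 2 - 1 = (‖u‖ - 1) * (‖u‖ + 1) by ring, abs_mul,
        abs_of_nonneg (by linarith : 0 ≤ ‖u‖ + 1)]
    nlinarith [abs_nonneg (‖u‖ - 1)]
  have hlt : δ / N < 1 := (div_lt_one hN).2 hNδ
  have hupos : 0 < ‖u‖ := by linarith [(abs_le.1 habs).1]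
  refine ⟨‖u‖⁻¹ • u, by simp [norm_smul, hupos.ne'], ?_⟩
  have e : ‖u‖⁻¹ • u - u = (1 - ‖u‖) • (‖u‖⁻¹ • u) := by
    rw [sub_smul, smul_inv_smul₀ hupos.ne', one_smul]
  rw [e, norm_smul, norm_smul, norm_inv, norm_norm, inv_mul_cancel₀ hupos.ne', mul_one,
    Real.norm_eq_abs, abs_sub_comm]
  exact habs

lemma aux_local (s K : ℝ) (hs0 : 0 < s) (hK : 0 < K)
    (b : ℝ → ℝ) (hb_nonneg : ∀ x, 0 ≤ b x)
    (hb_sing : KernelSingular b s K)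
    (F₀ : Measure E3) [IsProbabilityMeasure F₀]
    (hnoline : ∀ (v₀ w : E3), ‖w‖ = 1 → F₀ {v : E3 | ∃ τ : ℝ, v = v₀ + τ • w} ≠ 1)
    (ψ₀ : E3 → ℂ) (hψ₀ : ψ₀ = charFn F₀)
    (ψ : ℝ → E3 → ℂ) (hψ : IsBobylevSolution b ψ ψ₀) (ω₀ : E3) (hω₀ : ‖ω₀‖ = 1) :
    ∃ ε > (0:ℝ), ∃ c > (0:ℝ), ∃ R ≥ (1:ℝ), ∃ T > (0:ℝ), ∀ t ∈ Icc (0:ℝ) T, ∀ ξ : E3,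
      R ≤ ‖ξ‖ → ‖‖ξ‖⁻¹ • ξ - ω₀‖ < ε →
      ENNReal.ofReal (c * ‖ξ‖ ^ (2 * s)) ≤ aux_J b ψ t ξ := by
  obtain ⟨η, hη0, hη1⟩ := aux_nondeg F₀ hnoline ω₀ hω₀
  rw [← hψ₀, ← hψ.init] at hη1
  set c₁ := (1 - ‖ψ 0 η‖) / 2 with hc₁
  have hc₁pos : 0 < c₁ := by rw [hc₁]; linarith
  obtain ⟨δ, hδ, hδψ⟩ : ∃ δ > (0:ℝ), ∀ t ∈ Icc (0:ℝ) (δ / 2), ∀ x : E3, ‖x - η‖ < δ →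
      ‖ψ t x‖ < 1 - c₁ := by
    have hc := (hψ.cont (0, η) ⟨Set.mem_Ici.2 le_rfl, mem_univ _⟩).norm
    have hev := hc.eventually (gt_mem_nhds (show ‖ψ 0 η‖ < 1 - c₁ by rw [hc₁]; linarith))
    obtain ⟨δ, hδ, hsub⟩ := Metric.mem_nhdsWithin_iff.1 hev
    refine ⟨δ, hδ, fun t ht x hx => ?_⟩
    have : ((t, x) : ℝ × E3) ∈ ball ((0:ℝ), η) δ ∩ Ici 0 ×ˢ univ := by
      refine ⟨?_, ht.1, mem_univ _⟩
      rw [mem_ball, Prod.dist_eq, max_lt_iff]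
      refine ⟨?_, by rwa [dist_eq_norm]⟩
      simp only [Real.dist_eq, sub_zero]
      rw [abs_of_nonneg ht.1]
      linarith [ht.2]
    exact hsub this
  obtain ⟨θ₀, hθ₀, hθ⟩ : ∃ θ₀ > (0:ℝ), ∀ θ ∈ Ioo (0:ℝ) θ₀,
      K / 2 < b (Real.cos θ) * θ ^ (2 + 2*s) := by
    have hev := hb_sing.eventually (lt_mem_nhds (show K / 2 < K by linarith))
    obtain ⟨θ₀, hθ₀, hsub⟩ := mem_nhdsGT_iff_exists_Ioo_subset.1 hev
    exact ⟨θ₀, hθ₀, fun θ h => hsub h⟩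
  set M := ‖η‖ + δ with hM
  have hηn := norm_nonneg η
  have hMpos : 0 < M := by positivity
  have hπ := Real.pi_pos
  refine ⟨δ / (8 * (‖η‖ + 1)), by positivity,
    K / 2 * (π * M) ^ (-(2 + 2*s)) * c₁ * (δ ^ 2 / 64), by positivity,
    1 + 8 * ‖η‖ ^ 2 / δ + π * M / θ₀ + δ, ?_, δ / 2, by positivity, ?_⟩
  · have : 0 ≤ 8 * ‖η‖ ^ 2 / δ + π * M / θ₀ + δ := by positivity
    linarith
  intro t ht ξ hR hξ
  set N := ‖ξ‖ with hN
  have p1 : 0 ≤ 8 * ‖η‖ ^ 2 / δ := by positivity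
  have p2 : 0 < π * M / θ₀ := by positivity
  have hNpos : 0 < N := by linarith
  have hNδ : δ < N := by linarith
  have hNη : 8 * ‖η‖ ^ 2 ≤ δ * N := by
    have : 8 * ‖η‖ ^ 2 / δ ≤ N := by linarith
    rw [div_le_iff₀ hδ] at this
    linarith
  have hNθ : π * M / N < θ₀ := by
    have : π * M / θ₀ < N := by linarith
    rw [div_lt_iff₀ hθ₀] at this
    rw [div_lt_iff₀ hNpos]
    linarith
  set ω := N⁻¹ • ξ with hωdef
  have hω : ‖ω‖ = 1 := by
    rw [hωdef, norm_smul, norm_inv, Real.norm_of_nonneg hNpos.le, ← hN, inv_mul_cancel₀ hNpos.ne']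
  have hξω : ξ = N • ω := by rw [hωdef, smul_inv_smul₀ hNpos.ne']
  have hin : |⟪ω, η⟫| ≤ δ / 8 := by
    have e : ⟪ω, η⟫ = ⟪ω - ω₀, η⟫ := by rw [inner_sub_left, hη0, sub_zero]
    rw [e]
    calc |⟪ω - ω₀, η⟫| ≤ ‖ω - ω₀‖ * ‖η‖ := abs_real_inner_le_norm _ _
      _ ≤ δ / (8 * (‖η‖ + 1)) * (‖η‖ + 1) := by gcongr; linarith
      _ = δ / 8 := by field_simp
  obtain ⟨p, hp, hpu⟩ := aux_point ω η N δ hω hNpos hδ hin hNη hNδ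
  have hcap := aux_cap p hp (δ / N) (by positivity) ((div_le_one hNpos).2 hNδ.le)
  set A := {σ : sphere (0 : E3) 1 | ‖(σ : E3) - p‖ < δ / N} with hA
  have hAm : MeasurableSet A := by
    apply IsOpen.measurableSet
    exact isOpen_lt (by fun_prop) continuous_const
  have hbd : ∀ σ ∈ A, K / 2 * (π * M / N) ^ (-(2 + 2*s)) * c₁ ≤
      b (⟪ξ, (σ : E3)⟫ / N) * (1 - ‖ψ t (xiMinus ξ σ)‖) := by
    intro σ hσ
    have hσ1 : ‖(σ : E3)‖ = 1 := by simpa using σ.2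
    have hσu : ‖(σ : E3) - (ω - (2 / N) • η)‖ < 2 * (δ / N) := by
      have := norm_sub_le_norm_sub_add_norm_sub (σ : E3) p (ω - (2 / N) • η)
      have h' : ‖(σ : E3) - p‖ < δ / N := hσ
      linarith
    have e1 : xiMinus ξ σ = (N / 2) • (ω - σ) := by
      rw [xiMinus, ← hN, smul_sub]
      congr 1
      rw [hωdef, smul_smul]
      congr 1
      field_simp
    have e2 : xiMinus ξ σ - η = -((N / 2) • ((σ : E3) - (ω - (2 / N) • η))) := by
      rw [e1]
      simp only [smul_sub, smul_smul]
      rw [show N / 2 * (2 / N) = 1 by field_simp, one_smul]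
      abel
    have hclose : ‖xiMinus ξ σ - η‖ < δ := by
      rw [e2, norm_neg, norm_smul, Real.norm_of_nonneg (by positivity)]
      calc N / 2 * ‖(σ : E3) - (ω - (2 / N) • η)‖ < N / 2 * (2 * (δ / N)) := by gcongr
        _ = δ := by field_simp
    have hψlt := hδψ t ht _ hclose
    have hne : ω ≠ σ := by
      intro h
      rw [e1, h, sub_self, smul_zero] at hψlt
      obtain ⟨Ψ, hΨ, hΨe⟩ := hψ.isCharFn t ht.1
      rw [hΨe] at hψlt
      simp [charFn] at hψlt
      linarith
    have hmn : π / 2 * ‖ω - σ‖ ≤ π * M / N := by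
      have h1 : ‖xiMinus ξ σ‖ ≤ M := by
        have := norm_le_norm_sub_add (xiMinus ξ σ) η
        linarith
      rw [e1, norm_smul, Real.norm_of_nonneg (by positivity)] at h1
      rw [le_div_iff₀ hNpos]
      nlinarith
    have hk := aux_kernel s K hs0 b θ₀ hθ hK ω σ hω hσ1 hne _ hmn hNθ
    have e3 : ⟪ξ, (σ : E3)⟫ / N = ⟪ω, (σ : E3)⟫ := by
      rw [hωdef, real_inner_smul_left]; ring
    rw [e3]
    exact mul_le_mul hk (by linarith) hc₁pos.le (hb_nonneg _)
  have heq : K / 2 * (π * M) ^ (-(2 + 2*s)) * c₁ * (δ ^ 2 / 64) * N ^ (2 * s) =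
      (K / 2 * (π * M / N) ^ (-(2 + 2*s)) * c₁) * ((δ / N) ^ 2 / 64) := by
    rw [Real.div_rpow (by positivity) hNpos.le, Real.rpow_neg hNpos.le, 
      Real.rpow_add hNpos, Real.rpow_two]
    field_simp
  rw [heq, ENNReal.ofReal_mul (by positivity)]
  unfold aux_J
  calc _ ≤ ENNReal.ofReal (K / 2 * (π * M / N) ^ (-(2 + 2*s)) * c₁) * sphμ A := by gcongr
    _ = ∫⁻ σ in A, ENNReal.ofReal (K / 2 * (π * M / N) ^ (-(2 + 2*s)) * c₁) ∂sphμ := by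
      rw [setLIntegral_const]
    _ ≤ ∫⁻ σ in A, ENNReal.ofReal (b (⟪ξ, (σ : E3)⟫ / ‖ξ‖) * (1 - ‖ψ t (xiMinus ξ σ)‖)) ∂sphμ :=
      setLIntegral_mono' hAm fun σ hσ => ENNReal.ofReal_le_ofReal (hbd σ hσ)
    _ ≤ _ := setLIntegral_le_lintegral _ _

/-- non-degenerate coercivity when the initial measure is not
concentrated on a straight line. -/
theorem nondegenerate_coercivity_not_on_line
    (s K : ℝ) (hs0 : 0 < s) (hs1 : s < 1) (hK : 0 < K)
    (b : ℝ → ℝ) (hb_meas : Measurable b) (hb_nonneg : ∀ x, 0 ≤ b x)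
    (hb_sing : KernelSingular b s K)
    (α : ℝ) (hα : 2 * s < α) (hα2 : α ≤ 2)
    (F₀ : Measure E3) [IsProbabilityMeasure F₀]
    (hnoline : ∀ (v₀ w : E3), ‖w‖ = 1 → F₀ {v : E3 | ∃ τ : ℝ, v = v₀ + τ • w} ≠ 1)
    (ψ₀ : E3 → ℂ) (hψ₀ : ψ₀ = charFn F₀) (hψ₀K : KBdd α ψ₀)
    (ψ : ℝ → E3 → ℂ) (hψ : IsBobylevSolution b ψ ψ₀) :
    ∃ T > (0:ℝ), ∃ C > (0:ℝ), ∀ t ∈ Set.Icc (0:ℝ) T, ∀ h : E3 → ℂ, Measurable h →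
      (∫⁻ ξ : E3, ENNReal.ofReal ((1 + ‖ξ‖ ^ 2) ^ s * ‖h ξ‖ ^ 2)) < ⊤ →
      (∫⁻ ξ : E3, ENNReal.ofReal ((1 + ‖ξ‖ ^ 2) ^ s * ‖h ξ‖ ^ 2)) ≤
        ENNReal.ofReal C *
          ((∫⁻ ξ : E3,
              (∫⁻ σ, ENNReal.ofReal
                  (b (⟪ξ, (σ : E3)⟫ / ‖ξ‖) * (1 - ‖ψ t (xiMinus ξ σ)‖)) ∂sphμ)
                * ENNReal.ofReal (‖h ξ‖ ^ 2))
            + ∫⁻ ξ : E3, ENNReal.ofReal (‖h ξ‖ ^ 2)) := by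
  obtain ⟨c, hc, R, hR, T, hT, hloc⟩ : ∃ c > (0:ℝ), ∃ R ≥ (1:ℝ), ∃ T > (0:ℝ),
      ∀ t ∈ Icc (0:ℝ) T, ∀ ξ : E3, R ≤ ‖ξ‖ → ‖ξ‖⁻¹ • ξ ∈ sphere (0 : E3) 1 →
      ENNReal.ofReal (c * ‖ξ‖ ^ (2 * s)) ≤ aux_J b ψ t ξ := by
    refine (isCompact_sphere (0 : E3) 1).induction_on (p := fun U => ∃ c > (0:ℝ), ∃ R ≥ (1:ℝ),
      ∃ T > (0:ℝ), ∀ t ∈ Icc (0:ℝ) T, ∀ ξ : E3, R ≤ ‖ξ‖ → ‖ξ‖⁻¹ • ξ ∈ U →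
      ENNReal.ofReal (c * ‖ξ‖ ^ (2 * s)) ≤ aux_J b ψ t ξ) ?_ ?_ ?_ ?_
    · exact ⟨1, one_pos, 1, le_rfl, 1, one_pos, fun t _ ξ _ h => absurd h (notMem_empty _)⟩
    · rintro U V hUV ⟨c, hc, R, hR, T, hT, h⟩
      exact ⟨c, hc, R, hR, T, hT, fun t ht ξ h1 h2 => h t ht ξ h1 (hUV h2)⟩
    · rintro U V ⟨c, hc, R, hR, T, hT, h⟩ ⟨c', hc', R', hR', T', hT', h'⟩
      refine ⟨min c c', lt_min hc hc', max R R', le_max_of_le_left hR, min T T', lt_min hT hT',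
        fun t ht ξ h1 h2 => ?_⟩
      have hN : (0:ℝ) ≤ ‖ξ‖ ^ (2 * s) := by positivity
      rcases h2 with h2 | h2
      · refine le_trans (ENNReal.ofReal_le_ofReal ?_)
          (h t ⟨ht.1, ht.2.trans (min_le_left _ _)⟩ ξ ((le_max_left _ _).trans h1) h2)
        exact mul_le_mul_of_nonneg_right (min_le_left _ _) hN
      · refine le_trans (ENNReal.ofReal_le_ofReal ?_)
          (h' t ⟨ht.1, ht.2.trans (min_le_right _ _)⟩ ξ ((le_max_right _ _).trans h1) h2)
        exact mul_le_mul_of_nonneg_right (min_le_right _ _) hN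
    · intro ω₀ hω₀
      obtain ⟨ε, hε, c, hc, R, hR, T, hT, h⟩ := aux_local s K hs0 hK b hb_nonneg hb_sing F₀
        hnoline ψ₀ hψ₀ ψ hψ ω₀ (by simpa using hω₀)
      refine ⟨ball ω₀ ε, mem_nhdsWithin_of_mem_nhds (ball_mem_nhds _ hε), c, hc, R, hR, T, hT,
        fun t ht ξ h1 h2 => h t ht ξ h1 ?_⟩
      rwa [mem_ball, dist_eq_norm] at h2
  refine ⟨T, hT, 2 ^ s / c + (1 + R ^ 2) ^ s, by positivity, fun t ht h hm _ => ?_⟩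
  set C := 2 ^ s / c + (1 + R ^ 2) ^ s with hC
  have hCc : 2 ^ s / c ≤ C := by
    have : (0:ℝ) ≤ (1 + R ^ 2) ^ s := by positivity
    linarith
  have hCR : (1 + R ^ 2) ^ s ≤ C := by
    have : (0:ℝ) ≤ 2 ^ s / c := by positivity
    linarith
  have hC0 : 0 ≤ C := le_trans (by positivity) hCR
  rw [← lintegral_add_right _ (by fun_prop), ← lintegral_const_mul' _ _ ENNReal.ofReal_ne_top]
  refine lintegral_mono fun ξ => ?_
  change ENNReal.ofReal ((1 + ‖ξ‖ ^ 2) ^ s * ‖h ξ‖ ^ 2) ≤ ENNReal.ofReal C *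
    (aux_J b ψ t ξ * ENNReal.ofReal (‖h ξ‖ ^ 2) + ENNReal.ofReal (‖h ξ‖ ^ 2))
  rw [ENNReal.ofReal_mul (by positivity)]
  by_cases hξ : R ≤ ‖ξ‖
  · have hN : 0 < ‖ξ‖ := by linarith
    have hJ := hloc t ht ξ hξ (by simp [norm_smul, hN.ne'])
    have h1 : (1 + ‖ξ‖ ^ 2) ^ s ≤ C * (c * ‖ξ‖ ^ (2 * s)) := by
      calc (1 + ‖ξ‖ ^ 2) ^ s ≤ (2 * ‖ξ‖ ^ 2) ^ s := by
            apply Real.rpow_le_rpow (by positivity) _ hs0.le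
            nlinarith
        _ = 2 ^ s / c * (c * ‖ξ‖ ^ (2 * s)) := by
            rw [Real.mul_rpow (by norm_num) (by positivity), ← Real.rpow_natCast, 
              ← Real.rpow_mul hN.le]
            push_cast
            field_simp
        _ ≤ C * (c * ‖ξ‖ ^ (2 * s)) := by gcongr
    calc _ ≤ ENNReal.ofReal (C * (c * ‖ξ‖ ^ (2 * s))) * ENNReal.ofReal (‖h ξ‖ ^ 2) := by gcongr
      _ = ENNReal.ofReal C * (ENNReal.ofReal (c * ‖ξ‖ ^ (2 * s)) * ENNReal.ofReal (‖h ξ‖ ^ 2)) := by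
        rw [ENNReal.ofReal_mul hC0, mul_assoc]
      _ ≤ ENNReal.ofReal C * (aux_J b ψ t ξ * ENNReal.ofReal (‖h ξ‖ ^ 2)) := by gcongr
      _ ≤ _ := by gcongr; exact le_self_add
  · push Not at hξ
    have h1 : (1 + ‖ξ‖ ^ 2) ^ s ≤ C := by
      refine le_trans (Real.rpow_le_rpow (by positivity) ?_ hs0.le) hCR
      gcongr
    calc _ ≤ ENNReal.ofReal C * ENNReal.ofReal (‖h ξ‖ ^ 2) := by gcongr
      _ ≤ _ := by gcongr; exact le_add_self
end
end

section
/- Let F₀ be a Borel probability measure on ℝ³ for which there is no straight line L = {v₀ + τ w : τ ∈ ℝ} (v₀ ∈ ℝ³, w a unit vector) with F₀(L) = 1, and let ψ₀(ξ) = ∫_{ℝ³} exp(−i v·ξ) dF₀(v) be its characteristic function. Then there exist a unit vector n ∈ ℝ³ and constants d > μ > 0, ε > 0, κ₀ > 0 such that 1 − |ψ₀(ξ)| ≥ κ₀ for every ξ ∈ ℝ³ with d − μ ≤ |ξ| ≤ d + μ and |ξ·n| ≤ ε|ξ|. -/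
noncomputable section

open MeasureTheory Real Filter Metric Set
open scoped RealInnerProductSpace Topology

/-- The integrand has modulus one. -/
lemma norm_integrand (v ξ : E3) :
    ‖Complex.exp (-(Complex.I * (⟪v, ξ⟫ : ℂ)))‖ = 1 := by
  rw [Complex.norm_exp]
  simp

lemma charFn_continuous (F : Measure E3) [IsProbabilityMeasure F] : Continuous (charFn F) := by
  unfold charFn
  refine continuous_of_dominated (bound := fun _ => 1) ?_ ?_ (integrable_const _) ?_
  · intro ξ
    exact Continuous.aestronglyMeasurable (by fun_prop)
  · intro ξ
    exact Eventually.of_forall fun v => (norm_integrand v ξ).le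
  · exact Eventually.of_forall fun v => by fun_prop

/-- Either the modulus is `< 1`, or the integrand is constant on the support. -/
lemma charFn_lt_or (F : Measure E3) [IsProbabilityMeasure F] (ξ : E3) :
    ‖charFn F ξ‖ < 1 ∨ ∃ c : ℂ, ∀ v ∈ F.support,
      Complex.exp (-(Complex.I * (⟪v, ξ⟫ : ℂ))) = c := by
  rcases ae_eq_const_or_norm_integral_lt_of_norm_le_const (μ := F) (C := 1)
    (f := fun v : E3 => Complex.exp (-(Complex.I * (⟪v, ξ⟫ : ℂ))))
    (Eventually.of_forall fun v => (norm_integrand v ξ).le) with h | h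
  · right
    refine ⟨_, fun v hv => Measure.support_subset_of_isClosed ?_ h hv⟩
    exact isClosed_eq (by fun_prop) continuous_const
  · left
    simpa [charFn] using h

lemma inner_eq_zero_of_exp_eq {a b ξ : E3}
    (h : Complex.exp (-(Complex.I * (⟪a, ξ⟫ : ℂ))) = Complex.exp (-(Complex.I * (⟪b, ξ⟫ : ℂ))))
    (hs : ‖b - a‖ * ‖ξ‖ < 2 * π) : ⟪b - a, ξ⟫ = 0 := by
  obtain ⟨n, hn⟩ := Complex.exp_eq_exp_iff_exists_int.1 h
  have h1 : ⟪b - a, ξ⟫ = n * (2 * π) := by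
    have := congrArg Complex.im hn
    simp at this
    rw [inner_sub_left]
    linarith
  have h2 : |(n : ℝ) * (2 * π)| < 2 * π := by
    rw [← h1]
    exact (abs_real_inner_le_norm _ _).trans_lt hs
  rw [abs_mul, abs_of_pos (by positivity : 0 < 2 * π)] at h2
  have h3 : |(n : ℝ)| < 1 := by
    by_contra hc
    push Not at hc
    nlinarith [Real.pi_pos]
  have h4 : n = 0 := by
    rw [← Int.abs_lt_one_iff]
    exact_mod_cast h3
  simp [h1, h4]

lemma exists_not_on_line (F : Measure E3) [IsProbabilityMeasure F]
    (hnoline : ∀ (v₀ w : E3), ‖w‖ = 1 → F {v : E3 | ∃ τ : ℝ, v = v₀ + τ • w} ≠ 1)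
    (v₀ w : E3) (hw : ‖w‖ = 1) : ∃ c ∈ F.support, ∀ τ : ℝ, c ≠ v₀ + τ • w := by
  by_contra hc
  push Not at hc
  apply hnoline v₀ w hw
  have h1 : {v : E3 | ∃ τ : ℝ, v = v₀ + τ • w} ∈ ae F :=
    mem_of_superset Measure.support_mem_ae hc
  rw [measure_eq_measure_of_null_diff (subset_univ _) (by simpa [← compl_eq_univ_diff] using mem_ae_iff.1 h1)]
  exact measure_univ

lemma exists_triple (F : Measure E3) [IsProbabilityMeasure F]
    (hnoline : ∀ (v₀ w : E3), ‖w‖ = 1 → F {v : E3 | ∃ τ : ℝ, v = v₀ + τ • w} ≠ 1) :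
    ∃ a ∈ F.support, ∃ b ∈ F.support, ∃ c ∈ F.support,
      LinearIndependent ℝ ![b - a, c - a] := by
  have hw : ‖(EuclideanSpace.single 0 1 : E3)‖ = 1 := by simp
  obtain ⟨a, ha, -⟩ := exists_not_on_line F hnoline 0 _ hw
  obtain ⟨b, hb, hb'⟩ := exists_not_on_line F hnoline a _ hw
  have hba : b - a ≠ 0 := by
    intro h
    apply hb' 0
    simpa using sub_eq_zero.1 h
  obtain ⟨c, hc, hc'⟩ := exists_not_on_line F hnoline a ((‖b - a‖⁻¹) • (b - a))
    (norm_smul_inv_norm (𝕜 := ℝ) hba)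
  refine ⟨a, ha, b, hb, c, hc, (LinearIndependent.pair_iff' hba).2 fun t ht => ?_⟩
  apply hc' (t * ‖b - a‖)
  rw [smul_smul, mul_assoc, mul_inv_cancel₀ (norm_ne_zero_iff.2 hba), mul_one, ht]
  abel

/-- The orthogonal complement of two independent vectors is a line. -/
lemma exists_normal {x y : E3} (h : LinearIndependent ℝ ![x, y]) :
    ∃ n : E3, ‖n‖ = 1 ∧ ∀ ξ : E3, ⟪x, ξ⟫ = 0 → ⟪y, ξ⟫ = 0 → ∃ t : ℝ, ξ = t • n := by
  set K : Submodule ℝ E3 := Submodule.span ℝ (Set.range ![x, y]) with hK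
  have h2 : Module.finrank ℝ K = 2 := by
    simpa using finrank_span_eq_card h
  have h1 : Module.finrank ℝ Kᗮ = 1 :=
    Submodule.finrank_add_finrank_orthogonal' (by rw [h2]; simp)
  obtain ⟨u, hu0, hu⟩ := finrank_eq_one_iff'.1 h1
  have hu0' : (u : E3) ≠ 0 := by simpa using hu0
  refine ⟨(‖(u : E3)‖⁻¹) • (u : E3), norm_smul_inv_norm (𝕜 := ℝ) hu0', fun ξ hx hy => ?_⟩
  have hξ : ξ ∈ Kᗮ := by
    rw [Submodule.mem_orthogonal]
    intro z hz
    induction hz using Submodule.span_induction with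
    | mem z hz =>
      obtain ⟨i, rfl⟩ := hz
      fin_cases i
      · exact hx
      · exact hy
    | zero => simp
    | add p q _ _ hp hq => rw [inner_add_left, hp, hq, add_zero]
    | smul r p _ hp => rw [real_inner_smul_left, hp, mul_zero]
  obtain ⟨t, ht⟩ := hu ⟨ξ, hξ⟩
  refine ⟨t * ‖(u : E3)‖, ?_⟩
  rw [smul_smul, mul_assoc, mul_inv_cancel₀ (norm_ne_zero_iff.2 hu0'), mul_one]
  exact (congrArg Subtype.val ht).symm

/-- a probability measure not concentrated on a straight line has
a characteristic function uniformly bounded away from `1` in modulus on a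
suitable annular, almost-equatorial region. -/
theorem charFn_bound_not_on_line
    (F₀ : Measure E3) [IsProbabilityMeasure F₀]
    (hnoline : ∀ (v₀ w : E3), ‖w‖ = 1 → F₀ {v : E3 | ∃ τ : ℝ, v = v₀ + τ • w} ≠ 1) :
    ∃ (n : E3) (d μ ε κ₀ : ℝ), ‖n‖ = 1 ∧ 0 < μ ∧ μ < d ∧ 0 < ε ∧ 0 < κ₀ ∧
      ∀ ξ : E3, d - μ ≤ ‖ξ‖ → ‖ξ‖ ≤ d + μ → |⟪ξ, n⟫| ≤ ε * ‖ξ‖ →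
        κ₀ ≤ 1 - ‖charFn F₀ ξ‖ := by
  obtain ⟨a, ha, b, hb, c, hc, hli⟩ := exists_triple F₀ hnoline
  obtain ⟨n, hn, hnξ⟩ := exists_normal hli
  set R : ℝ := ‖b - a‖ + ‖c - a‖ + 1 with hR
  have hR0 : 0 < R := by positivity
  set S : Set E3 := {ξ | 1 / R - 1 / (2 * R) ≤ ‖ξ‖ ∧ ‖ξ‖ ≤ 1 / R + 1 / (2 * R) ∧
    |⟪ξ, n⟫| ≤ 1 / 2 * ‖ξ‖} with hS
  have hhalf : 1 / R - 1 / (2 * R) = 1 / (2 * R) := by field_simp; norm_num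
  have hpos : 0 < 1 / (2 * R) := by positivity
  have hlt : ∀ ξ ∈ S, ‖charFn F₀ ξ‖ < 1 := by
    rintro ξ ⟨h1, h2, h3⟩
    rcases charFn_lt_or F₀ ξ with h | ⟨k, hk⟩
    · exact h
    exfalso
    have hξ0 : 0 < ‖ξ‖ := by linarith
    have hRξ : R * ‖ξ‖ < 2 * π := by
      have h4 : R * ‖ξ‖ ≤ R * (1 / R + 1 / (2 * R)) := by gcongr
      have h5 : R * (1 / R + 1 / (2 * R)) = 3 / 2 := by field_simp; norm_num
      linarith [Real.pi_gt_three]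
    have hb0 : ⟪b - a, ξ⟫ = 0 := by
      refine inner_eq_zero_of_exp_eq ((hk a ha).trans (hk b hb).symm) (lt_of_le_of_lt ?_ hRξ)
      gcongr
      linarith [norm_nonneg (c - a)]
    have hc0 : ⟪c - a, ξ⟫ = 0 := by
      refine inner_eq_zero_of_exp_eq ((hk a ha).trans (hk c hc).symm) (lt_of_le_of_lt ?_ hRξ)
      gcongr
      linarith [norm_nonneg (b - a)]
    obtain ⟨t, rfl⟩ := hnξ ξ hb0 hc0
    rw [real_inner_smul_left, real_inner_self_eq_norm_sq, norm_smul, hn] at h3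
    rw [norm_smul, hn] at hξ0
    simp at h3 hξ0
    have := abs_pos.2 hξ0
    linarith
  have hScl : IsClosed S := by
    refine IsClosed.and ?_ (IsClosed.and ?_ ?_)
    all_goals exact isClosed_le (by fun_prop) (by fun_prop)
  have hSc : IsCompact S := by
    refine (isCompact_closedBall (0 : E3) (1 / R + 1 / (2 * R))).of_isClosed_subset hScl ?_
    rintro ξ ⟨_, h2, _⟩
    simpa using h2
  have key : ∃ κ : ℝ, 0 < κ ∧ ∀ ξ ∈ S, κ ≤ 1 - ‖charFn F₀ ξ‖ := by
    rcases S.eq_empty_or_nonempty with he | hne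
    · exact ⟨1, one_pos, by simp [he]⟩
    · obtain ⟨x, hx, hmin⟩ := hSc.exists_isMinOn hne
        (f := fun ξ => 1 - ‖charFn F₀ ξ‖)
        (continuous_const.sub (charFn_continuous F₀).norm).continuousOn
      exact ⟨_, by linarith [hlt x hx], fun ξ hξ => hmin hξ⟩
  obtain ⟨κ, hκ, hall⟩ := key
  refine ⟨n, 1 / R, 1 / (2 * R), 1 / 2, κ, hn, hpos, by linarith, by norm_num, hκ, ?_⟩
  intro ξ h1 h2 h3
  exact hall ξ ⟨h1, h2, h3⟩
end
end

section
/- (Strict initial decay of |ψ|² on a circle orthogonal to the axis of concentration.) Let 0 < s < 1 and let the collision kernel b satisfy b(cos θ)·θ^{2+2s} → K as θ → 0+ for some K > 0. Let F₀ be a Borel probability measure on ℝ³ concentrated on the third coordinate axis (F₀({(0,0,v₃) : v₃ ∈ ℝ}) = 1) but not a single Dirac mass, let ψ₀ ∈ 𝒦^α (for some α ∈ (2s,2]) be its characteristic function, and let ψ be a solution of the Fourier-transformed (Bobylev) homogeneous Boltzmann Cauchy problem with initial datum ψ₀. Then there exist λ > 0 and c₁ > 0 such that ∂_t(|ψ|²)(0,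 ξ) ≤ −c₁ for every ξ ∈ ℝ³ with ξ·e₃ = 0 and |ξ| = λ, where e₃ = (0,0,1). -/
noncomputable section

open MeasureTheory Real Filter Metric Set
open scoped RealInnerProductSpace Topology

instance sphμ_finite : IsFiniteMeasure sphμ := by unfold sphμ; infer_instance

instance sphμ_openPos : sphμ.IsOpenPosMeasure := by unfold sphμ; infer_instance

lemma sph_ball_lower (r : ℝ) (hr : 0 < r) :
    ∃ m > (0:ℝ), ∀ p : sphere (0 : E3) 1, m ≤ sphμ.real (ball p r) := by
  have hopen : ∀ p : sphere (0 : E3) 1, 0 < sphμ.real (ball p (r/2)) := by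
    intro p
    rw [measureReal_def]
    apply ENNReal.toReal_pos
    · exact (isOpen_ball.measure_pos _ ⟨p, mem_ball_self (by positivity)⟩).ne'
    · exact measure_ne_top _ _
  obtain ⟨t, -, htf, ht⟩ := finite_cover_balls_of_compact
    (isCompact_univ : IsCompact (Set.univ : Set (sphere (0 : E3) 1))) (half_pos hr)
  have hmin : ∃ m > (0:ℝ), ∀ x ∈ t, m ≤ sphμ.real (ball x (r/2)) := by
    rcases t.eq_empty_or_nonempty with h | h
    · exact ⟨1, one_pos, by simp [h]⟩
    · obtain ⟨x, hx, hmx⟩ := htf.exists_minimalFor (fun x => sphμ.real (ball x (r/2))) t h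
      refine ⟨_, hopen x, fun y hy => ?_⟩
      rcases le_total (sphμ.real (ball x (r/2))) (sphμ.real (ball y (r/2))) with h | h
      · exact h
      · exact hmx hy h
  obtain ⟨m, hm, h⟩ := hmin
  refine ⟨m, hm, fun p => ?_⟩
  obtain ⟨x, hx, hpx⟩ := Set.mem_iUnion₂.1 (ht (Set.mem_univ p))
  refine (h x hx).trans (measureReal_mono ?_ (measure_ne_top _ _))
  intro y hy
  rw [mem_ball] at *
  have := dist_triangle y x p
  rw [dist_comm x p] at this
  linarith

lemma axis_ae (F : Measure E3) [IsProbabilityMeasure F]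
    (haxis : F {v : E3 | v 0 = 0 ∧ v 1 = 0} = 1) : ∀ᵐ v ∂F, v 0 = 0 ∧ v 1 = 0 := by
  have hm : MeasurableSet {v : E3 | v 0 = 0 ∧ v 1 = 0} := by
    apply MeasurableSet.inter
    · exact (isClosed_eq (by fun_prop) (by fun_prop)).measurableSet
    · exact (isClosed_eq (by fun_prop) (by fun_prop)).measurableSet
  exact (mem_ae_iff_prob_eq_one hm).2 haxis

lemma pair_set (F : Measure E3) [IsProbabilityMeasure F]
    (haxis : F {v : E3 | v 0 = 0 ∧ v 1 = 0} = 1) (hnd : ∀ v₀ : E3, F {v₀} ≠ 1) :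
    ∃ n : ℕ, 0 < (F.prod F).real
      {p : E3 × E3 | 1 / ((n:ℝ)+1) ≤ |p.1 2 - p.2 2| ∧ |p.1 2 - p.2 2| ≤ (n:ℝ)+1} := by
  by_contra hcon
  push Not at hcon
  have h0 : ∀ n : ℕ, (F.prod F) {p : E3 × E3 | 1 / ((n:ℝ)+1) ≤ |p.1 2 - p.2 2| ∧ |p.1 2 - p.2 2| ≤ (n:ℝ)+1} = 0 := by
    intro n
    have := le_antisymm (hcon n) measureReal_nonneg
    rwa [measureReal_eq_zero_iff] at this
  have h1 : ∀ᵐ p ∂(F.prod F), p.1 2 = p.2 2 := by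
    have h2 := measure_iUnion_null h0
    rw [ae_iff]
    refine measure_mono_null ?_ h2
    intro p hp
    have hp : p.1 2 ≠ p.2 2 := hp
    have hpos : 0 < |p.1 2 - p.2 2| := abs_pos.2 (sub_ne_zero.2 hp)
    obtain ⟨n1, hn1⟩ := exists_nat_one_div_lt hpos
    obtain ⟨n2, hn2⟩ := exists_nat_ge |p.1 2 - p.2 2|
    refine Set.mem_iUnion.2 ⟨max n1 n2, ?_, ?_⟩
    · refine le_trans ?_ hn1.le
      apply one_div_le_one_div_of_le (by positivity)
      push_cast
      linarith [le_max_left (n1:ℝ) n2]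
    · push_cast
      linarith [le_max_right (n1:ℝ) n2]
  have h3 := Measure.ae_ae_of_ae_prod h1
  have hax := axis_ae F haxis
  obtain ⟨v, hv, hva⟩ := (h3.and hax).exists
  apply hnd v
  rw [← mem_ae_iff_prob_eq_one (measurableSet_singleton v)]
  filter_upwards [hv, hax] with w hw hwa
  rw [Set.mem_singleton_iff]
  ext i
  fin_cases i
  · exact hwa.1.trans hva.1.symm
  · exact hwa.2.trans hva.2.symm
  · exact hw.symm

lemma charFn_mul (F : Measure E3) [IsProbabilityMeasure F] (x y : E3) :
    (charFn F x * charFn F y).re = ∫ p : E3 × E3, Real.cos (⟪p.1, x⟫ + ⟪p.2, y⟫) ∂(F.prod F) := by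
  unfold charFn
  rw [← integral_prod_mul]
  have hInteg : Integrable (fun p : E3 × E3 => Complex.exp (-(Complex.I * (⟪p.1, x⟫ : ℂ))) *
      Complex.exp (-(Complex.I * (⟪p.2, y⟫ : ℂ)))) (F.prod F) := by
    refine Integrable.of_bound (Continuous.aestronglyMeasurable (by fun_prop)) 1 ?_
    refine Eventually.of_forall fun p => ?_
    rw [← Complex.exp_add, Complex.norm_exp]
    simp
  have := integral_re hInteg
  simp only [RCLike.re_eq_complex_re] at this
  rw [← this]
  congr 1
  ext p
  rw [← Complex.exp_add, Complex.exp_re]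
  simp
  rw [← Real.cos_neg]
  ring_nf

lemma charFn_pm (F : Measure E3) [IsProbabilityMeasure F]
    (haxis : F {v : E3 | v 0 = 0 ∧ v 1 = 0} = 1) (ξ : E3) (hξ : ξ 2 = 0) (σ : sphere (0 : E3) 1) :
    (charFn F (xiPlus ξ σ) * charFn F (xiMinus ξ σ)).re =
      ∫ p : E3 × E3, Real.cos (‖ξ‖ / 2 * (σ : E3) 2 * (p.1 2 - p.2 2)) ∂(F.prod F) := by
  rw [charFn_mul]
  have hax := axis_ae F haxis
  have h1 : ∀ᵐ p ∂(F.prod F), p.1 0 = 0 ∧ p.1 1 = 0 :=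
    Measure.quasiMeasurePreserving_fst.ae hax
  have h2 : ∀ᵐ p ∂(F.prod F), p.2 0 = 0 ∧ p.2 1 = 0 :=
    Measure.quasiMeasurePreserving_snd.ae hax
  apply integral_congr_ae
  filter_upwards [h1, h2] with p hp1 hp2
  congr 1
  simp [xiPlus, xiMinus, PiLp.inner_apply, Fin.sum_univ_three, hp1, hp2, hξ]
  ring

lemma charFn_orth (F : Measure E3) [IsProbabilityMeasure F]
    (haxis : F {v : E3 | v 0 = 0 ∧ v 1 = 0} = 1) (ξ : E3) (hξ : ξ 2 = 0) : charFn F ξ = 1 := by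
  have hax := axis_ae F haxis
  unfold charFn
  rw [integral_congr_ae (g := fun _ => (1:ℂ))]
  · simp
  · filter_upwards [hax] with v hv
    have : ⟪v, ξ⟫ = 0 := by
      simp [PiLp.inner_apply, Fin.sum_univ_three, hv, hξ]
    simp [this]

lemma cos_integrable (F : Measure E3) [IsProbabilityMeasure F] (a : ℝ) :
    Integrable (fun p : E3 × E3 => Real.cos (a * (p.1 2 - p.2 2))) (F.prod F) := by
  refine Integrable.of_bound (Continuous.aestronglyMeasurable (by fun_prop)) 1 ?_
  exact Eventually.of_forall fun p => Real.abs_cos_le_one _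

lemma cos_int_le_one (F : Measure E3) [IsProbabilityMeasure F] (a : ℝ) :
    ∫ p : E3 × E3, Real.cos (a * (p.1 2 - p.2 2)) ∂(F.prod F) ≤ 1 := by
  calc _ ≤ ∫ p : E3 × E3, (1:ℝ) ∂(F.prod F) :=
        integral_mono (cos_integrable F a) (integrable_const 1) fun p => Real.cos_le_one _
    _ = 1 := by simp

lemma cos_int_le (F : Measure E3) [IsProbabilityMeasure F] (n : ℕ) (a a₀ : ℝ) (h0 : 0 < a₀)
    (ha : a₀ ≤ a) (han : a * ((n:ℝ)+1) ≤ π) :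
    ∫ p : E3 × E3, Real.cos (a * (p.1 2 - p.2 2)) ∂(F.prod F) ≤ 1 -
      (F.prod F).real
      {p : E3 × E3 | 1 / ((n:ℝ)+1) ≤ |p.1 2 - p.2 2| ∧ |p.1 2 - p.2 2| ≤ (n:ℝ)+1} *
      (1 - Real.cos (a₀ * (1 / ((n:ℝ)+1)))) := by
  set S := {p : E3 × E3 | 1 / ((n:ℝ)+1) ≤ |p.1 2 - p.2 2| ∧ |p.1 2 - p.2 2| ≤ (n:ℝ)+1} with hS
  have hSm : MeasurableSet S := by
    apply MeasurableSet.inter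
    · exact (isClosed_le (f := fun _ : E3 × E3 => 1 / ((n:ℝ)+1))
        (g := fun p : E3 × E3 => |p.1 2 - p.2 2|) (by fun_prop) (by fun_prop)).measurableSet
    · exact (isClosed_le (f := fun p : E3 × E3 => |p.1 2 - p.2 2|)
        (g := fun _ : E3 × E3 => (n:ℝ)+1) (by fun_prop) (by fun_prop)).measurableSet
  set c := 1 - Real.cos (a₀ * (1 / ((n:ℝ)+1))) with hc
  have hi : Integrable (S.indicator (fun _ => c)) (F.prod F) :=
    (integrable_const c).indicator hSm
  calc _ ≤ ∫ p : E3 × E3, (1 - S.indicator (fun _ => c) p) ∂(F.prod F) := by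
        apply integral_mono (cos_integrable F a) ((integrable_const 1).sub hi)
        intro p
        by_cases hp : p ∈ S
        · simp only [Pi.sub_apply, Set.indicator_of_mem hp, hc]
          obtain ⟨hp1, hp2⟩ := hp
          have : Real.cos (a * (p.1 2 - p.2 2)) = Real.cos (a * |p.1 2 - p.2 2|) := by
            rw [← Real.cos_abs, abs_mul, abs_of_pos (h0.trans_le ha)]
          rw [this]
          have : Real.cos (a * |p.1 2 - p.2 2|) ≤ Real.cos (a₀ * (1 / ((n:ℝ)+1))) := by
            apply Real.cos_le_cos_of_nonneg_of_le_pi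
            · positivity
            · exact (mul_le_mul_of_nonneg_left hp2 (h0.trans_le ha).le).trans han
            · apply mul_le_mul ha hp1 (by positivity) (h0.trans_le ha).le
          linarith
        · simp only [Pi.sub_apply, Set.indicator_of_notMem hp, sub_zero]
          exact Real.cos_le_one _
    _ = 1 - (F.prod F).real S * c := by
        rw [integral_sub (integrable_const 1) hi, integral_indicator hSm]
        simp

set_option maxHeartbeats 1000000 in
/-- strict initial decay of `|ψ|²` on a circle orthogonal to the
axis on which the initial measure is concentrated. -/
theorem initial_decay_on_circle
    (s K : ℝ) (hs0 : 0 < s) (hs1 : s < 1) (hK : 0 < K)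
    (b : ℝ → ℝ) (hb_meas : Measurable b) (hb_nonneg : ∀ x, 0 ≤ b x)
    (hb_sing : KernelSingular b s K)
    (α : ℝ) (hα : 2 * s < α) (hα2 : α ≤ 2)
    (F₀ : Measure E3) [IsProbabilityMeasure F₀]
    (haxis : F₀ {v : E3 | v 0 = 0 ∧ v 1 = 0} = 1)
    (hnotdirac : ∀ v₀ : E3, F₀ {v₀} ≠ 1)
    (ψ₀ : E3 → ℂ) (hψ₀ : ψ₀ = charFn F₀) (hψ₀K : KBdd α ψ₀)
    (ψ : ℝ → E3 → ℂ) (hψ : IsBobylevSolution b ψ ψ₀) :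
    ∃ lam > (0:ℝ), ∃ c₁ > (0:ℝ), ∀ ξ : E3, ξ 2 = 0 → ‖ξ‖ = lam →
      ∀ D : ℝ, HasDerivWithinAt (fun t => ‖ψ t ξ‖ ^ 2) D (Set.Ici 0) 0 → D ≤ -c₁ := by
  -- lower bound of the kernel near grazing angles
  have hker : ∃ θ₀ > (0:ℝ), θ₀ ≤ 1 ∧ ∀ θ, 0 < θ → θ < θ₀ → K / 2 ≤ b (Real.cos θ) := by
    have h1 := hb_sing.eventually (lt_mem_nhds (half_lt_self hK))
    obtain ⟨u, hu, hsub⟩ := mem_nhdsGT_iff_exists_Ioo_subset.1 h1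
    refine ⟨min u 1, lt_min hu one_pos, min_le_right _ _, fun θ h0 hlt => ?_⟩
    have h2 : K / 2 < b (Real.cos θ) * θ ^ (2 + 2*s) :=
      hsub ⟨h0, hlt.trans_le (min_le_left _ _)⟩
    have h3 : θ ^ (2 + 2*s) ≤ 1 :=
      Real.rpow_le_one h0.le (hlt.le.trans (min_le_right _ _)) (by linarith)
    nlinarith [hb_nonneg (Real.cos θ)]
  obtain ⟨θ₀, hθ0, hθ1, hker⟩ := hker
  have hpi := Real.pi_gt_three
  have hc1 : Real.cos θ₀ < Real.cos (θ₀/2) :=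
    Real.cos_lt_cos_of_nonneg_of_le_pi (by linarith) (by linarith) (by linarith)
  have hc2 : Real.cos (θ₀/2) < 1 := by
    rw [← Real.cos_zero]
    exact Real.cos_lt_cos_of_nonneg_of_le_pi le_rfl (by linarith) (by linarith)
  have hsin : 0 < Real.sin (θ₀/2) := Real.sin_pos_of_pos_of_lt_pi (by linarith) (by linarith)
  obtain ⟨r, hr, hr1, hr2, hr3⟩ : ∃ r > (0:ℝ), r < Real.cos (θ₀/2) - Real.cos θ₀ ∧
      r < 1 - Real.cos (θ₀/2) ∧ r < Real.sin (θ₀/2) / 2 := by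
    obtain ⟨r, hr, h⟩ := exists_between (show (0:ℝ) < min (Real.cos (θ₀/2) - Real.cos θ₀)
      (min (1 - Real.cos (θ₀/2)) (Real.sin (θ₀/2) / 2)) from
        lt_min (by linarith) (lt_min (by linarith) (by linarith)))
    rw [lt_min_iff, lt_min_iff] at h
    exact ⟨r, hr, h.1, h.2.1, h.2.2⟩
  obtain ⟨m, hm, hball⟩ := sph_ball_lower r hr
  obtain ⟨n, hn⟩ := pair_set F₀ haxis hnotdirac
  set P := (F₀.prod F₀).real
      {p : E3 × E3 | 1 / ((n:ℝ)+1) ≤ |p.1 2 - p.2 2| ∧ |p.1 2 - p.2 2| ≤ (n:ℝ)+1} with hP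
  have hn1 : (0:ℝ) < (n:ℝ) + 1 := by positivity
  set lam : ℝ := 2 / ((n:ℝ)+1) with hlam
  have hlampos : 0 < lam := by positivity
  set a₀ : ℝ := lam / 2 * (Real.sin (θ₀/2) / 2) with ha₀
  have ha₀pos : 0 < a₀ := by positivity
  set c := 1 - Real.cos (a₀ * (1 / ((n:ℝ)+1))) with hc
  have hcpos : 0 < c := by
    have h1 : a₀ * (1 / ((n:ℝ)+1)) ≤ 1 := by
      have e1 : 1 / ((n:ℝ)+1) ≤ 1 := by
        rw [div_le_one hn1]; linarith [(Nat.cast_nonneg n : (0:ℝ) ≤ n)]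
      have e2 : lam / 2 = 1 / ((n:ℝ)+1) := by rw [hlam]; ring
      have e3 : a₀ ≤ 1 := by
        rw [ha₀, e2]
        have := Real.sin_le_one (θ₀/2)
        have e4 : (0:ℝ) < 1 / ((n:ℝ)+1) := by positivity
        nlinarith
      have e4 : (0:ℝ) < 1 / ((n:ℝ)+1) := by positivity
      nlinarith
    have : Real.cos (a₀ * (1 / ((n:ℝ)+1))) < Real.cos 0 :=
      Real.cos_lt_cos_of_nonneg_of_le_pi le_rfl (by linarith) (by positivity)
    rw [Real.cos_zero] at this
    linarith
  clear_value P lam a₀ c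
  refine ⟨lam, hlampos, 2 * (K / 2 * (P * c) * m), by positivity, ?_⟩
  intro ξ hξ hnorm D hD
  have hψ0 : ψ 0 ξ = 1 := by rw [hψ.init, hψ₀]; exact charFn_orth F₀ haxis ξ hξ
  have hder := (hψ.eq 0 le_rfl ξ).norm_sq
  have hDeq := (uniqueDiffOn_Ici (0:ℝ) 0 (by simp)).eq_deriv _ hD hder
  rw [hψ0] at hDeq
  have hInteg := hψ.integrable 0 le_rfl ξ
  have hre := integral_re hInteg
  simp only [RCLike.re_eq_complex_re] at hre
  have hDeq2 : D = 2 * ∫ σ, (bobylevIntegrand b ψ 0 ξ σ).re ∂sphμ := by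
    rw [hDeq, hre]
    simp [Complex.inner]
  -- pointwise formula for the integrand
  have hpt : ∀ σ : sphere (0 : E3) 1, (bobylevIntegrand b ψ 0 ξ σ).re =
      b (⟪ξ, (σ : E3)⟫ / ‖ξ‖) *
      (∫ p : E3 × E3, Real.cos (lam / 2 * (σ : E3) 2 * (p.1 2 - p.2 2)) ∂(F₀.prod F₀) - 1) := by
    intro σ
    rw [← hnorm, ← charFn_pm F₀ haxis ξ hξ σ]
    unfold bobylevIntegrand
    rw [Complex.re_ofReal_mul, hψ0, hψ.init, hψ₀]
    simp
  -- center of the ball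
  have hξpos : 0 < ‖ξ‖ := by rw [hnorm]; exact hlampos
  set e : E3 := (‖ξ‖)⁻¹ • ξ with he
  have henorm : ‖e‖ = 1 := by
    rw [he, norm_smul, norm_inv, norm_norm, inv_mul_cancel₀ hξpos.ne']
  have he2 : e 2 = 0 := by simp [he, hξ]
  set e3 : E3 := EuclideanSpace.single 2 1 with he3
  have he3norm : ‖e3‖ = 1 := by simp [he3]
  have horth : ⟪e, e3⟫ = 0 := by
    simp [he3, EuclideanSpace.inner_single_right, he2]
  clear_value e e3
  set q : E3 := Real.cos (θ₀/2) • e + Real.sin (θ₀/2) • e3 with hq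
  have hqnorm : ‖q‖ = 1 := by
    have h1 : ‖q‖ ^ 2 = 1 := by
      rw [hq, norm_add_sq_real, inner_smul_left, inner_smul_right, horth, norm_smul, norm_smul,
        henorm, he3norm]
      simp
    nlinarith [norm_nonneg q]
  have hqe : ⟪e, q⟫ = Real.cos (θ₀/2) := by
    rw [hq, inner_add_right, inner_smul_right, inner_smul_right, horth,
      real_inner_self_eq_norm_sq, henorm]
    ring
  have hq2 : q 2 = Real.sin (θ₀/2) := by
    simp [hq, he2, he3]
  clear_value q
  let qs : sphere (0 : E3) 1 := ⟨q, by simp [hqnorm]⟩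
  have hineq : ∀ σ : sphere (0 : E3) 1, (bobylevIntegrand b ψ 0 ξ σ).re ≤
      (ball qs r).indicator (fun _ => -(K / 2 * (P * c))) σ := by
    intro σ
    rw [hpt]
    have hbn := hb_nonneg (⟪ξ, (σ : E3)⟫ / ‖ξ‖)
    by_cases hσ : σ ∈ ball qs r
    · rw [Set.indicator_of_mem hσ]
      have hd : ‖(σ : E3) - q‖ < r := by
        rw [mem_ball, Subtype.dist_eq, dist_eq_norm] at hσ
        exact hσ
      have hcoord : |(σ : E3) 2 - Real.sin (θ₀/2)| < r := by
        have := (PiLp.norm_apply_le ((σ : E3) - q) 2).trans_lt hd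
        rwa [PiLp.sub_apply, hq2, Real.norm_eq_abs] at this
      have hinner : |⟪e, (σ : E3)⟫ - Real.cos (θ₀/2)| < r := by
        rw [← hqe, ← inner_sub_right]
        refine (abs_real_inner_le_norm _ _).trans_lt ?_
        rwa [henorm, one_mul]
      have hx : ⟪ξ, (σ : E3)⟫ / ‖ξ‖ = ⟪e, (σ : E3)⟫ := by
        rw [he, inner_smul_left]
        simp [div_eq_inv_mul]
      rw [hx] at hbn ⊢
      rw [abs_lt] at hcoord hinner
      have hbK : K / 2 ≤ b ⟪e, (σ : E3)⟫ := by
        have hlt1 : ⟪e, (σ : E3)⟫ < 1 := by linarith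
        have hgt : Real.cos θ₀ < ⟪e, (σ : E3)⟫ := by linarith
        have hgm : -1 ≤ ⟪e, (σ : E3)⟫ := (Real.neg_one_le_cos θ₀).trans hgt.le
        have := hker (Real.arccos ⟪e, (σ : E3)⟫) (Real.arccos_pos.2 hlt1) (by
          rw [← Real.arccos_cos hθ0.le (by linarith : θ₀ ≤ π)]
          exact Real.arccos_lt_arccos (Real.neg_one_le_cos θ₀) hgt hlt1.le)
        rwa [Real.cos_arccos hgm hlt1.le] at this
      have hσ1 : (σ : E3) 2 ≤ 1 := by
        have h1 := PiLp.norm_apply_le (σ : E3) 2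
        have h2 : ‖(σ : E3)‖ = 1 := norm_eq_of_mem_sphere σ
        rw [h2, Real.norm_eq_abs] at h1
        exact (le_abs_self _).trans h1
      have hcos := cos_int_le F₀ n (lam / 2 * (σ : E3) 2) a₀ ha₀pos
        (by rw [ha₀]; apply mul_le_mul_of_nonneg_left _ (by positivity); linarith)
        (by
          have : lam / 2 * (σ : E3) 2 * ((n:ℝ)+1) = (σ : E3) 2 := by
            rw [hlam]; field_simp
          rw [this]; linarith)
      rw [← hP, ← hc] at hcos
      have hPc : 0 < P * c := by positivity
      have h1 := mul_le_mul_of_nonneg_right hbK hPc.le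
      have h2 := mul_le_mul_of_nonneg_left
        (show (∫ p : E3 × E3, Real.cos (lam / 2 * (σ : E3) 2 * (p.1 2 - p.2 2)) ∂(F₀.prod F₀)) - 1
          ≤ -(P * c) by linarith) hbn
      linarith
    · rw [Set.indicator_of_notMem hσ]
      have := cos_int_le_one F₀ (lam / 2 * (σ : E3) 2)
      exact mul_nonpos_of_nonneg_of_nonpos hbn (by linarith)
  have hmb : MeasurableSet (ball qs r) := measurableSet_ball
  have hfin : ∫ σ, (bobylevIntegrand b ψ 0 ξ σ).re ∂sphμ ≤ -(K / 2 * (P * c)) * sphμ.real (ball qs r) := by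
    calc _ ≤ ∫ σ, (ball qs r).indicator (fun _ => -(K / 2 * (P * c))) σ ∂sphμ :=
          integral_mono hInteg.re ((integrable_const _).indicator hmb) hineq
      _ = _ := by
          rw [integral_indicator hmb]
          simp [mul_comm]
  have hb2 := hball qs
  have hKP : 0 < K / 2 * (P * c) := by positivity
  have h3 := mul_le_mul_of_nonneg_left hb2 hKP.le
  rw [hDeq2]
  linarith
end
end
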